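/- arXiv:math/0009094 — 2 statements merged into one kernel-verified Lean document; each statement's English description precedes it below -/
import Mathlib

section
/- Let T be a regular interval exchange transformation on k intervals, x ∈ [0,1), and U(x) the infinite word coding the orbit of x. Then the complexity function of U(x) satisfies p(n) = n(k−1) + 1 for all n ≥ 1. -/
/-- `w` occurs in the infinite word `U` at position `i`. -/
def OccursAt {A : Type*} (U : ℕ → A) (w : List A) (i : ℕ) : Prop :=
  ∀ j : Fin w.length, U (i + j) = w.get j

/-- `w` is a factor of the infinite word `U`. -/
def IsFactor {A : Type*} (U : ℕ → A) (w : List A) : Prop := ∃ i, OccursAt U w i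

/-- `U` is recurrent: every factor occurs infinitely often. -/
def Recurrent {A : Type*} (U : ℕ → A) : Prop :=
  ∀ w, IsFactor U w → ∀ N, ∃ i, N ≤ i ∧ OccursAt U w i

/-- The set of return words over `w` in `U`: words starting at an occurrence of `w`
and ending just before the next occurrence. -/
def ReturnWords {A : Type*} (U : ℕ → A) (w : List A) : Set (List A) :=
  {r | ∃ i j, OccursAt U w i ∧ OccursAt U w j ∧ i < j ∧
      (∀ t, i < t → t < j → ¬ OccursAt U w t) ∧
      r = List.ofFn (fun t : Fin (j - i) => U (i + t))}

/-- The complexity function: number of distinct factors of length `n`. -/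
noncomputable def Complexity {A : Type*} (U : ℕ → A) (n : ℕ) : ℕ :=
  Set.ncard {w : List A | w.length = n ∧ IsFactor U w}

open Set

/-- Left endpoint of the `i`-th interval: `∑_{j<i} λ_j`. -/
noncomputable def leftPt {k : ℕ} (lam : Fin k → ℝ) (i : Fin k) : ℝ :=
  ∑ j ∈ Finset.univ.filter (fun j => j < i), lam j

/-- The `i`-th exchanged interval `X_i = [∑_{j<i} λ_j, ∑_{j≤i} λ_j)`. -/
def Xint {k : ℕ} (lam : Fin k → ℝ) (i : Fin k) : Set ℝ :=
  Set.Ico (leftPt lam i) (leftPt lam i + lam i)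

/-- The translation amount `a_i = ∑_{ℓ<σ⁻¹(i)} λ_{σ(ℓ)} − ∑_{ℓ<i} λ_ℓ`. -/
noncomputable def transAmt {k : ℕ} (lam : Fin k → ℝ) (σ : Equiv.Perm (Fin k)) (i : Fin k) : ℝ :=
  (∑ j ∈ Finset.univ.filter (fun j => j < σ.symm i), lam (σ j)) - leftPt lam i

/-- `T` is the interval exchange transformation on `[0,1)` with data `(lam, σ)`
(extended by the identity outside `[0,1)`). -/
def IsIET {k : ℕ} (lam : Fin k → ℝ) (σ : Equiv.Perm (Fin k)) (T : ℝ → ℝ) : Prop :=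
  (∀ i, 0 < lam i) ∧ (∑ i, lam i = 1) ∧
  (∀ i, ∀ x ∈ Xint lam i, T x = x + transAmt lam σ i) ∧
  (∀ x, x ∉ Set.Ico (0:ℝ) 1 → T x = x)

/-- Keane's regularity condition: `T^n a_i = a_j` for interior endpoints forces `n = 0, i = j`
(stated symmetrically in `i, j`, which covers negative powers of the bijection `T`). -/
def KeaneRegular {k : ℕ} (lam : Fin k → ℝ) (T : ℝ → ℝ) : Prop :=
  ∀ n : ℕ, ∀ i j : Fin k, (i : ℕ) ≠ 0 → (j : ℕ) ≠ 0 →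
    T^[n] (leftPt lam i) = leftPt lam j → n = 0 ∧ i = j

/-- `U` is the symbolic coding of the `T`-orbit of `x`: `U n = i` iff `T^n x ∈ X_i`. -/
def IsCoding {k : ℕ} (lam : Fin k → ℝ) (T : ℝ → ℝ) (x : ℝ) (U : ℕ → Fin k) : Prop :=
  ∀ n, T^[n] x ∈ Xint lam (U n)

open Filter Topology Function

/-!
Cut `[0, 1)` at `0` and at the points which one of `1, T, …, T^(n-1)` sends to a separator. Two
points have the same coding up to time `n` exactly when they lie in the same piece, and by Keane's
condition the preimages of the `k - 1` separators at distinct times are distinct, so that there are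
`n (k - 1) + 1` pieces. It remains to see that every orbit visits every piece.

Let `R` be the set of right limits of an orbit, which is invariant under `T`, and consider a gap of
`R`. Under `T`, as under its inverse, a gap moves rigidly unless it contains one of finitely many
points, and in a bounded interval it cannot move rigidly forever without overlapping its translates.
Hence the left end point of the gap, if positive, reaches a separator in the future, and also came
from `0` or from a separator in the past. Keane's condition forbids this, so no gap starts inside
`(0, 1)`. The same rigidity shows that a point is a right limit of its own orbit, and together these
two facts force `R ⊇ [0, 1)`.
-/

lemma iterate_apply_of_backward_orbit {α : Type*} {f : α → α} {p : ℕ → α}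
    (hp : ∀ n, f (p (n + 1)) = p n) (m n : ℕ) : f^[n] (p (m + n)) = p m := by
  induction n with
  | zero => rfl
  | succ n ih => rw [iterate_succ_apply, ← add_assoc, hp, ih]

section RealLine

lemma eventually_disjoint_Ioc_right {F : Set ℝ} (hF : F.Finite) (p : ℝ) :
    ∀ᶠ z in 𝓝[>] p, Disjoint F (Ioc p z) := by
  simp only [Set.disjoint_left, mem_Ioc, not_and, not_le]
  refine (eventually_all_finite hF).2 fun f _ => ?_
  rcases le_or_gt f p with hfp | hpf
  · exact .of_forall fun z hpf => absurd hpf hfp.not_gt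
  · filter_upwards [Ioo_mem_nhdsGT hpf] with z hz _ using hz.2

lemma eventually_disjoint_Ioc_left {F : Set ℝ} (hF : F.Finite) {p : ℝ} (hp : p ∉ F) :
    ∀ᶠ z in 𝓝[<] p, Disjoint F (Ioc z p) := by
  simp only [Set.disjoint_left, mem_Ioc, not_and, not_le]
  refine (eventually_all_finite hF).2 fun f hf => ?_
  rcases (ne_of_mem_of_not_mem hf hp).lt_or_gt with hfp | hpf
  · filter_upwards [Ioo_mem_nhdsLT hfp] with z hz hzf using absurd hzf hz.1.not_gt
  · exact .of_forall fun z _ => hpf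

lemma map_nhdsWithin_of_eventually_sub_eq {f : ℝ → ℝ} {s : Set ℝ} {p : ℝ}
    (hf : ∀ᶠ z in 𝓝[s] p, f z - f p = z - p) :
    map f (𝓝[s] p) = 𝓝[(· + (f p - p)) '' s] (f p) := by
  have heq : f =ᶠ[𝓝[s] p] (· + (f p - p)) := hf.mono fun z hz => by
    change f z = z + (f p - p)
    linarith
  rw [map_congr heq]
  convert! (Homeomorph.addRight (f p - p)).isEmbedding.map_nhdsWithin_eq s p using 2
  simp

lemma image_Ioc_of_sub_eq {f : ℝ → ℝ} {y z : ℝ} (hf : ∀ w ∈ Ioc y z, f w - f y = w - y)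
    (hyz : y ≤ z) : f '' Ioc y z = Ioc (f y) (f z) := by
  have heq : EqOn f (· + (f y - y)) (Ioc y z) := fun w hw => by
    change f w = w + (f y - y)
    linarith [hf w hw]
  have hz : f z = z + (f y - y) := by
    rcases hyz.eq_or_lt with rfl | hlt
    · ring
    · exact heq ⟨hlt, le_rfl⟩
  rw [heq.image_eq, image_add_const_Ioc, hz, add_sub_cancel]

lemma exists_dist_lt_of_isBounded {p : ℕ → ℝ} (hp : Bornology.IsBounded (range p)) {δ : ℝ}
    (hδ : 0 < δ) (N : ℕ) : ∃ m ≥ N, ∃ n > m, dist (p m) (p n) < δ := by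
  obtain ⟨a, -, φ, hφ, hlim⟩ := tendsto_subseq_of_bounded hp mem_range_self
  obtain ⟨K, hK⟩ := Metric.cauchySeq_iff.1 hlim.cauchySeq δ hδ
  refine ⟨φ (max K N), (le_max_right _ _).trans hφ.le_apply,
    φ (max K N + 1), hφ (Nat.lt_succ_self _), hK _ ?_ _ ?_⟩ <;> omega

/- Each `b ∈ B` lies in the gap of at most one `p n`, the gaps being pairwise disjoint. From some
index on the gaps therefore never shrink, which makes the points `p n` uniformly separated. -/
lemma false_of_gaps_propagate {S B : Set ℝ} {p : ℕ → ℝ} (hB : B.Finite) (hp : Injective p)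
    (hpS : ∀ n, p n ∈ S) (hbdd : Bornology.IsBounded (range p))
    (hisol : ∀ n, ∀ᶠ z in 𝓝[>] p n, z ∉ S)
    (hstep : ∀ n δ, Disjoint S (Ioo (p n) (p n + δ)) → Disjoint B (Ioo (p n) (p n + δ)) →
      Disjoint S (Ioo (p (n + 1)) (p (n + 1) + δ))) : False := by
  have honce : ∀ b ∈ B, {n | p n < b ∧ Disjoint S (Ioo (p n) b)}.Finite := by
    refine fun b _ => Set.Subsingleton.finite ?_
    rintro m ⟨hmb, hm⟩ n ⟨hnb, hn⟩
    by_contra hmn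
    rcases (hp.ne hmn).lt_or_gt with hlt | hlt
    · exact disjoint_left.1 hm (hpS n) ⟨hlt, hnb⟩
    · exact disjoint_left.1 hn (hpS m) ⟨hlt, hmb⟩
  obtain ⟨N, hN⟩ := (hB.biUnion honce).bddAbove
  have hgapB : ∀ n > N, ∀ δ, Disjoint S (Ioo (p n) (p n + δ)) →
      Disjoint B (Ioo (p n) (p n + δ)) := by
    refine fun n hn δ hδ => disjoint_left.2 fun b hb hbn => hn.not_ge (hN ?_)
    exact mem_biUnion hb ⟨hbn.1, hδ.mono_right (Ioo_subset_Ioo_right hbn.2.le)⟩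
  obtain ⟨d, hd, hdS⟩ := mem_nhdsGT_iff_exists_Ioo_subset.1 (hisol (N + 1))
  set δ := d - p (N + 1) with hδ
  have hgap : ∀ n ≥ N + 1, Disjoint S (Ioo (p n) (p n + δ)) := by
    intro n hn
    induction n, hn using Nat.le_induction with
    | base => rw [hδ, add_sub_cancel]; exact disjoint_right.2 hdS
    | succ n hn ih => exact hstep n δ ih (hgapB n hn δ ih)
  obtain ⟨m, hm, n, hmn, hdist⟩ := exists_dist_lt_of_isBounded hbdd (sub_pos.2 hd) (N + 1)
  rw [Real.dist_eq, abs_lt] at hdist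
  rcases (hp.ne hmn.ne).lt_or_gt with hlt | hlt
  · exact disjoint_left.1 (hgap m hm) (hpS n) ⟨hlt, by linarith⟩
  · exact disjoint_left.1 (hgap n (hm.trans hmn.le)) (hpS m) ⟨hlt, by linarith⟩

end RealLine

/-- An exchange `T` of the intervals into which the finite set `A` cuts `[0, 1)`, subject to
Keane's condition, described by its dynamics alone: `T` permutes `[0, 1)`, is a translation off `A`,
has an inverse which is a translation off the image of `A ∪ {0}`, sends a point of `A` to `0`, and
never sends a point of `A` to `A` in positive time. -/
structure RegularExchange (T : ℝ → ℝ) (A : Set ℝ) : Prop where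
  finite : A.Finite
  subset_Ioo : A ⊆ Ioo 0 1
  bijOn : BijOn T (Ico 0 1) (Ico 0 1)
  sub_eq : ∀ ⦃y z⦄, y ∈ Ico (0 : ℝ) 1 → z ∈ Ico (0 : ℝ) 1 → y ≤ z → Disjoint A (Ioc y z) →
    T z - T y = z - y
  sub_eq_of_image : ∀ ⦃y z⦄, y ∈ Ico (0 : ℝ) 1 → z ∈ Ico (0 : ℝ) 1 → T y ≤ T z →
    Disjoint (T '' insert 0 A) (Ioc (T y) (T z)) → T z - T y = z - y
  zero_mem_image : 0 ∈ T '' A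
  eq_zero_of_iterate_mem : ∀ ⦃n a⦄, a ∈ A → T^[n] a ∈ A → n = 0

/-- The left end points of the cylinders of length `n`, that is, of the intervals on which
`T, …, T^[n]` are all translations. -/
def cylinderStarts (T : ℝ → ℝ) (A : Set ℝ) (n : ℕ) : Set ℝ :=
  {p | p ∈ Ico 0 1 ∧ (p = 0 ∨ ∃ m < n, T^[m] p ∈ A)}

lemma cylinderStarts_zero (T : ℝ → ℝ) (A : Set ℝ) : cylinderStarts T A 0 = {0} := by
  ext p
  simp +contextual [cylinderStarts]

lemma cylinderStarts_succ (T : ℝ → ℝ) (A : Set ℝ) (n : ℕ) :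
    cylinderStarts T A (n + 1) = cylinderStarts T A n ∪ (Ico 0 1 ∩ T^[n] ⁻¹' A) := by
  ext p
  simp only [cylinderStarts, Nat.exists_lt_succ_right, mem_ofPred_eq, mem_union, mem_inter_iff,
    mem_preimage]
  grind

lemma disjoint_Ioc_iterate_iff {T : ℝ → ℝ} {A : Set ℝ} {n : ℕ} {y z : ℝ} (hy : 0 ≤ y) (hz : z < 1)
    (hyz : y ≤ z) (htrans : ∀ w ∈ Icc y z, T^[n] w - T^[n] y = w - y) :
    Disjoint A (Ioc (T^[n] y) (T^[n] z)) ↔ Disjoint (Ico 0 1 ∩ T^[n] ⁻¹' A) (Ioc y z) := by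
  have hsub : Ioc y z ⊆ Ico 0 1 := fun w hw => ⟨hy.trans hw.1.le, hw.2.trans_lt hz⟩
  rw [← image_Ioc_of_sub_eq (fun w hw => htrans w (Ioc_subset_Icc_self hw)) hyz,
    disjoint_comm, disjoint_image_left, disjoint_comm, disjoint_iff_inter_eq_empty,
    disjoint_iff_inter_eq_empty, inter_right_comm, inter_eq_right.2 hsub, inter_comm]

/-- The points of which every right neighbourhood is visited by the forward orbit of `x`. -/
def rightLimits (T : ℝ → ℝ) (x : ℝ) : Set ℝ :=
  {y | ∃ᶠ z in 𝓝[>] y, z ∈ range fun n => T^[n] x}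

/-- The points of `(0, 1)` which lie outside `R` but are limits of `R` from the left: the left end
points of the components of the complement of `R`, when that complement is open to the right. -/
def gapStarts (R : Set ℝ) : Set ℝ :=
  {u | u ∈ Ioo 0 1 ∧ u ∉ R ∧ ∃ᶠ v in 𝓝[<] u, v ∈ R}

lemma eventually_notMem_rightLimits {T : ℝ → ℝ} {x u : ℝ} (hu : u ∉ rightLimits T x) :
    ∀ᶠ v in 𝓝[>] u, v ∉ rightLimits T x := by
  obtain ⟨d, hud, hd⟩ := mem_nhdsGT_iff_exists_Ioo_subset.1 (not_frequently.1 hu)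
  filter_upwards [Ioo_mem_nhdsGT hud] with v hv
  exact not_frequently.2 (mem_of_superset (Ioo_mem_nhdsGT hv.2)
    ((Ioo_subset_Ioo_left hv.1.le).trans hd))

lemma eventually_notMem_gapStarts {R : Set ℝ} {u : ℝ} (hu : ∀ᶠ v in 𝓝[>] u, v ∉ R) :
    ∀ᶠ v in 𝓝[>] u, v ∉ gapStarts R := by
  obtain ⟨d, hud, hd⟩ := mem_nhdsGT_iff_exists_Ioo_subset.1 hu
  filter_upwards [Ioo_mem_nhdsGT hud] with v hv hvR
  exact hvR.2.2 (mem_of_superset (Ioo_mem_nhdsLT hv.1)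
    fun w hw hwR => hd ⟨hw.1, hw.2.trans hv.2⟩ hwR)

namespace RegularExchange

variable {T : ℝ → ℝ} {A : Set ℝ}

lemma subset_Ico (h : RegularExchange T A) : A ⊆ Ico 0 1 :=
  h.subset_Ioo.trans Ioo_subset_Ico_self

lemma iterate_mem (h : RegularExchange T A) (n : ℕ) {y : ℝ} (hy : y ∈ Ico (0 : ℝ) 1) :
    T^[n] y ∈ Ico (0 : ℝ) 1 :=
  h.bijOn.mapsTo.iterate n hy

lemma eq_zero_of_iterate_mem_of_mem_insert (h : RegularExchange T A) {n : ℕ} {b : ℝ}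
    (hb : b ∈ insert 0 A) (hn : T^[n] b ∈ A) : n = 0 := by
  rcases hb with rfl | hb
  · obtain ⟨a, ha, ha0⟩ := h.zero_mem_image
    have := h.eq_zero_of_iterate_mem (n := n + 1) ha (by rwa [iterate_succ_apply, ha0])
    omega
  · exact h.eq_zero_of_iterate_mem hb hn

lemma apply_pos (h : RegularExchange T A) {q : ℝ} (hq : q ∈ Ico (0 : ℝ) 1) (hqA : q ∉ A) :
    0 < T q := by
  obtain ⟨a, ha, ha0⟩ := h.zero_mem_image
  refine (h.bijOn.mapsTo hq).1.lt_of_ne fun hq0 => hqA ?_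
  rwa [h.bijOn.injOn hq (h.subset_Ico ha) (hq0.symm.trans ha0.symm)]

/-! ### Cylinders -/

lemma bijOn_iterate_preimage (h : RegularExchange T A) (n : ℕ) :
    BijOn T^[n] (Ico 0 1 ∩ T^[n] ⁻¹' A) A := by
  have hbij := h.bijOn.iterate n
  refine ⟨fun p hp => hp.2, hbij.injOn.mono inter_subset_left, fun a ha => ?_⟩
  obtain ⟨p, hp, rfl⟩ := hbij.surjOn (h.subset_Ico ha)
  exact ⟨p, ⟨hp, ha⟩, rfl⟩

lemma finite_cylinderStarts (h : RegularExchange T A) (n : ℕ) :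
    (cylinderStarts T A n).Finite := by
  induction n with
  | zero => rw [cylinderStarts_zero]; exact finite_singleton 0
  | succ n ih =>
    rw [cylinderStarts_succ]
    exact ih.union ((h.bijOn_iterate_preimage n).finite_iff_finite.2 h.finite)

lemma disjoint_cylinderStarts_preimage (h : RegularExchange T A) (n : ℕ) :
    Disjoint (cylinderStarts T A n) (Ico 0 1 ∩ T^[n] ⁻¹' A) := by
  rw [disjoint_left]
  rintro p ⟨-, rfl | ⟨m, hmn, hm⟩⟩ ⟨-, hn⟩
  · obtain rfl := h.eq_zero_of_iterate_mem_of_mem_insert (mem_insert _ _) hn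
    exact lt_irrefl _ (h.subset_Ioo hn).1
  · have := h.eq_zero_of_iterate_mem (n := n - m) hm (by
      rwa [← iterate_add_apply, Nat.sub_add_cancel hmn.le])
    omega

lemma ncard_cylinderStarts (h : RegularExchange T A) (n : ℕ) :
    (cylinderStarts T A n).ncard = n * A.ncard + 1 := by
  induction n with
  | zero => simp [cylinderStarts_zero]
  | succ n ih =>
    have hbij := h.bijOn_iterate_preimage n
    rw [cylinderStarts_succ, ncard_union_eq (h.disjoint_cylinderStarts_preimage n)
      (h.finite_cylinderStarts n) (hbij.finite_iff_finite.2 h.finite), ih, hbij.ncard_eq]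
    ring

lemma exists_cylinderStart_le (h : RegularExchange T A) (n : ℕ) {y : ℝ}
    (hy : y ∈ Ico (0 : ℝ) 1) :
    ∃ p ∈ cylinderStarts T A n, p ≤ y ∧ Disjoint (cylinderStarts T A n) (Ioc p y) := by
  obtain ⟨p, ⟨hp, hpy⟩, hmax⟩ := exists_max_image (cylinderStarts T A n ∩ Iic y) id
    ((h.finite_cylinderStarts n).inter_of_left _) ⟨0, ⟨by simp, Or.inl rfl⟩, hy.1⟩
  exact ⟨p, hp, hpy, disjoint_left.2 fun q hq hqp => hqp.1.not_ge (hmax q ⟨hq, hqp.2⟩)⟩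

lemma iterate_sub_eq (h : RegularExchange T A) {n : ℕ} {y z : ℝ} (hy : y ∈ Ico (0 : ℝ) 1)
    (hz : z ∈ Ico (0 : ℝ) 1) (hyz : y ≤ z) (hdisj : Disjoint (cylinderStarts T A n) (Ioc y z)) :
    T^[n] z - T^[n] y = z - y := by
  induction n generalizing z with
  | zero => simp
  | succ n ih =>
    rw [cylinderStarts_succ, disjoint_union_left] at hdisj
    have htrans : ∀ w ∈ Icc y z, T^[n] w - T^[n] y = w - y := fun w hw =>
      ih ⟨hy.1.trans hw.1, hw.2.trans_lt hz.2⟩ hw.1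
        (hdisj.1.mono_right (Ioc_subset_Ioc_right hw.2))
    have hz_trans := htrans z ⟨hyz, le_rfl⟩
    rw [iterate_succ_apply', iterate_succ_apply', h.sub_eq (h.iterate_mem n hy)
      (h.iterate_mem n hz) (by linarith)
      ((disjoint_Ioc_iterate_iff hy.1 hz.2 hyz htrans).2 hdisj.2), hz_trans]

/-! ### Orbits -/

lemma eq_zero_of_iterate_eq_self (h : RegularExchange T A) {m : ℕ} {y : ℝ}
    (hy : y ∈ Ico (0 : ℝ) 1) (hm : T^[m] y = y) : m = 0 := by
  obtain ⟨p, hp, hpy, hdisj⟩ := h.exists_cylinderStart_le m hy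
  have hpm : T^[m] p = p := by linarith [h.iterate_sub_eq hp.1 hy hpy hdisj]
  have hreturn : ∀ a ∈ A, IsPeriodicPt T m a → m = 0 := fun a ha hma =>
    h.eq_zero_of_iterate_mem ha (hma.symm ▸ ha)
  rcases hp with ⟨-, rfl | ⟨j, -, hj⟩⟩
  · obtain ⟨a, ha, ha0⟩ := h.zero_mem_image
    refine hreturn a ha (h.bijOn.injOn (h.iterate_mem m (h.subset_Ico ha)) (h.subset_Ico ha) ?_)
    rw [← iterate_succ_apply' T, iterate_succ_apply, ha0, hpm]
  · exact hreturn _ hj (IsPeriodicPt.apply_iterate hpm j)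

lemma iterate_injective (h : RegularExchange T A) {x : ℝ} (hx : x ∈ Ico (0 : ℝ) 1) :
    Injective fun n => T^[n] x := by
  intro m n hmn
  wlog hle : m ≤ n generalizing m n
  · exact (this hmn.symm (le_of_not_ge hle)).symm
  have := h.eq_zero_of_iterate_eq_self (m := n - m) (h.iterate_mem m hx) (by
    rw [← iterate_add_apply, Nat.sub_add_cancel hle]
    exact hmn.symm)
  omega

lemma exists_backward_orbit (h : RegularExchange T A) {u : ℝ} (hu : u ∈ Ico (0 : ℝ) 1) :
    ∃ p : ℕ → ℝ, Injective p ∧ p 0 = u ∧ (∀ n, p n ∈ Ico (0 : ℝ) 1) ∧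
      ∀ n, T (p (n + 1)) = p n := by
  have hmaps : MapsTo (invFunOn T (Ico 0 1)) (Ico 0 1) (Ico 0 1) := h.bijOn.surjOn.mapsTo_invFunOn
  set p : ℕ → ℝ := fun n => (invFunOn T (Ico 0 1))^[n] u
  have hpI : ∀ n, p n ∈ Ico (0 : ℝ) 1 := fun n => hmaps.iterate n hu
  have hp : ∀ n, T (p (n + 1)) = p n := fun n => by
    simp only [p, iterate_succ_apply']
    exact h.bijOn.invOn_invFunOn.2 (hpI n)
  refine ⟨p, fun m n hmn => h.iterate_injective (hpI (m + n)) ?_, rfl, hpI, hp⟩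
  change T^[m] (p (m + n)) = T^[n] (p (m + n))
  rw [iterate_apply_of_backward_orbit hp m n, add_comm m n,
    iterate_apply_of_backward_orbit hp n m, hmn]

lemma map_nhdsGT (h : RegularExchange T A) {y : ℝ} (hy : y ∈ Ico (0 : ℝ) 1) :
    map T (𝓝[>] y) = 𝓝[>] (T y) := by
  rw [map_nhdsWithin_of_eventually_sub_eq, image_add_const_Ioi, add_sub_cancel]
  filter_upwards [Ioo_mem_nhdsGT hy.2, eventually_disjoint_Ioc_right h.finite y] with z hz hdisj
  exact h.sub_eq hy ⟨hy.1.trans hz.1.le, hz.2⟩ hz.1.le hdisj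

lemma map_nhdsLT (h : RegularExchange T A) {q : ℝ} (hq : q ∈ Ico (0 : ℝ) 1)
    (hqA : q ∉ insert 0 A) : map T (𝓝[<] q) = 𝓝[<] (T q) := by
  obtain ⟨hq0, hqA⟩ := not_or.1 hqA
  rw [map_nhdsWithin_of_eventually_sub_eq, image_add_const_Iio, add_sub_cancel]
  filter_upwards [Ioo_mem_nhdsLT (hq.1.lt_of_ne' hq0), eventually_disjoint_Ioc_left h.finite hqA]
    with z hz hdisj
  linarith [h.sub_eq ⟨hz.1.le, hz.2.trans hq.2⟩ hq hz.2.le hdisj]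

lemma map_mem_rightLimits_iff (h : RegularExchange T A) {x y : ℝ} (hx : x ∈ Ico (0 : ℝ) 1)
    (hy : y ∈ Ico (0 : ℝ) 1) : T y ∈ rightLimits T x ↔ y ∈ rightLimits T x := by
  have hne : ∀ᶠ w in 𝓝[>] (T y), w ≠ x :=
    (nhdsGT_le_nhdsNE _).trans (nhdsNE_le_cofinite _) (finite_singleton x).compl_mem_cofinite
  simp only [rightLimits, mem_ofPred_eq]
  rw [← h.map_nhdsGT hy] at hne ⊢
  refine frequently_map.trans (frequently_congr ?_)
  filter_upwards [Ioo_mem_nhdsGT hy.2, hne] with z hz hzx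
  constructor
  · rintro ⟨_ | m, hm⟩
    · exact absurd hm.symm hzx
    · refine ⟨m, h.bijOn.injOn (h.iterate_mem m hx) ⟨hy.1.trans hz.1.le, hz.2⟩ ?_⟩
      rw [← iterate_succ_apply' T]
      exact hm
  · rintro ⟨m, rfl⟩
    exact ⟨m + 1, iterate_succ_apply' T m x⟩

lemma iterate_mem_rightLimits_iff (h : RegularExchange T A) {x y : ℝ} (hx : x ∈ Ico (0 : ℝ) 1)
    (hy : y ∈ Ico (0 : ℝ) 1) (n : ℕ) : T^[n] y ∈ rightLimits T x ↔ y ∈ rightLimits T x := by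
  induction n with
  | zero => rfl
  | succ n ih => rw [iterate_succ_apply', h.map_mem_rightLimits_iff hx (h.iterate_mem n hy), ih]

lemma exists_mem_Ioo_apply_eq (h : RegularExchange T A) {y w δ : ℝ} (hy : y ∈ Ico (0 : ℝ) 1)
    (hdisj : Disjoint (insert 1 A) (Ioo y (y + δ))) (hw : w ∈ Ioo (T y) (T y + δ)) :
    ∃ z ∈ Ioo y (y + δ), z ∈ Ico 0 1 ∧ T z = w := by
  obtain ⟨h1, hA⟩ := disjoint_insert_left.1 hdisj
  have hz : y + (w - T y) ∈ Ioo y (y + δ) := ⟨by linarith [hw.1], by linarith [hw.2]⟩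
  have hz1 : y + (w - T y) < 1 := lt_of_not_ge fun hle => h1 ⟨hy.2, hle.trans_lt hz.2⟩
  have hzI : y + (w - T y) ∈ Ico 0 1 := ⟨hy.1.trans hz.1.le, hz1⟩
  refine ⟨_, hz, hzI, ?_⟩
  linarith [h.sub_eq hy hzI hz.1.le (hA.mono_right (Ioc_subset_Ioo_right hz.2))]

lemma apply_mem_Ioo (h : RegularExchange T A) {y w δ : ℝ} (hy : y ∈ Ico (0 : ℝ) 1)
    (hdisj : Disjoint (insert 1 (T '' insert 0 A)) (Ioo (T y) (T y + δ)))
    (hw : w ∈ Ioo y (y + δ)) : w ∈ Ico 0 1 ∧ T w ∈ Ioo (T y) (T y + δ) := by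
  obtain ⟨h1, hA⟩ := disjoint_insert_left.1 hdisj
  have hTy := h.bijOn.mapsTo hy
  have hv : T y + (w - y) ∈ Ioo (T y) (T y + δ) := ⟨by linarith [hw.1], by linarith [hw.2]⟩
  have hv1 : T y + (w - y) < 1 := lt_of_not_ge fun hle => h1 ⟨hTy.2, hle.trans_lt hv.2⟩
  obtain ⟨z, hz, hzv⟩ := h.bijOn.surjOn ⟨hTy.1.trans hv.1.le, hv1⟩
  rw [← hzv] at hv
  have hsub := h.sub_eq_of_image hy hz hv.1.le (hA.mono_right (Ioc_subset_Ioo_right hv.2))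
  obtain rfl : z = w := by linarith
  exact ⟨hz, hv⟩

lemma mem_rightLimits_self (h : RegularExchange T A) {x : ℝ} (hx : x ∈ Ico (0 : ℝ) 1) :
    x ∈ rightLimits T x := by
  by_contra hxR
  obtain ⟨q, hq, hqx⟩ := h.bijOn.surjOn hx
  -- `x` need not have a predecessor in its orbit, so its preimage `q` may stop a gap as well.
  refine false_of_gaps_propagate (S := range fun n => T^[n] x) (B := insert 1 (insert q A))
    ((h.finite.insert q).insert 1) (h.iterate_injective hx) mem_range_self
    ((Metric.isBounded_Ico 0 1).subset (range_subset_iff.2 fun n => h.iterate_mem n hx))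
    (fun n => not_frequently.1 ((h.iterate_mem_rightLimits_iff hx hx n).not.2 hxR)) ?_
  intro n δ hS hB
  rw [insert_comm, disjoint_insert_left] at hB
  have hn := h.iterate_mem n hx
  rw [iterate_succ_apply', disjoint_left]
  rintro _ ⟨m, rfl⟩ hw
  obtain ⟨z, hz, hzI, hzw⟩ := h.exists_mem_Ioo_apply_eq hn hB.2 hw
  rcases m with _ | m
  · rw [h.bijOn.injOn hzI hq (hzw.trans hqx.symm)] at hz
    exact hB.1 hz
  · refine disjoint_left.1 hS ⟨m, h.bijOn.injOn (h.iterate_mem m hx) hzI ?_⟩ hz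
    rw [hzw, ← iterate_succ_apply' T]

/-! ### Gaps of invariant sets -/

section GapStarts

variable {R : Set ℝ}

lemma map_mem_gapStarts_iff (h : RegularExchange T A)
    (hinv : ∀ y ∈ Ico (0 : ℝ) 1, (T y ∈ R ↔ y ∈ R)) {q : ℝ} (hq : q ∈ Ico (0 : ℝ) 1)
    (hqA : q ∉ insert 0 A) : T q ∈ gapStarts R ↔ q ∈ gapStarts R := by
  obtain ⟨hq0, hqA'⟩ := not_or.1 hqA
  have hqpos := hq.1.lt_of_ne' hq0
  refine and_congr (iff_of_true ⟨h.apply_pos hq hqA', (h.bijOn.mapsTo hq).2⟩ ⟨hqpos, hq.2⟩)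
    (and_congr (hinv q hq).not ?_)
  rw [← h.map_nhdsLT hq hqA, frequently_map]
  refine frequently_congr ?_
  filter_upwards [Ioo_mem_nhdsLT hqpos] with z hz using hinv z ⟨hz.1.le, hz.2.trans hq.2⟩

lemma exists_iterate_mem_of_mem_gapStarts (h : RegularExchange T A)
    (hinv : ∀ y ∈ Ico (0 : ℝ) 1, (T y ∈ R ↔ y ∈ R)) (hopen : ∀ u ∉ R, ∀ᶠ v in 𝓝[>] u, v ∉ R)
    {u : ℝ} (hu : u ∈ gapStarts R) : ∃ n, T^[n] u ∈ A := by
  by_contra! hA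
  have huI := Ioo_subset_Ico_self hu.1
  have hgap : ∀ n, T^[n] u ∈ gapStarts R := by
    intro n
    induction n with
    | zero => exact hu
    | succ n ih =>
      rw [iterate_succ_apply', h.map_mem_gapStarts_iff hinv (h.iterate_mem n huI)]
      · exact ih
      · exact not_or.2 ⟨ih.1.1.ne', hA n⟩
  refine false_of_gaps_propagate (B := insert 1 A) (h.finite.insert 1) (h.iterate_injective huI)
    hgap ((Metric.isBounded_Ico 0 1).subset (range_subset_iff.2 fun n => h.iterate_mem n huI))
    (fun n => eventually_notMem_gapStarts (hopen _ (hgap n).2.1)) ?_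
  intro n δ hS hB
  rw [iterate_succ_apply', disjoint_right]
  intro w hw hwS
  obtain ⟨z, hz, hzI, rfl⟩ := h.exists_mem_Ioo_apply_eq (h.iterate_mem n huI) hB hw
  have hzA : z ∉ insert 0 A := not_or.2
    ⟨((hgap n).1.1.trans hz.1).ne', fun hzA => disjoint_left.1 hB (mem_insert_of_mem 1 hzA) hz⟩
  exact disjoint_left.1 hS ((h.map_mem_gapStarts_iff hinv hzI hzA).1 hwS) hz

lemma exists_iterate_eq_of_mem_gapStarts (h : RegularExchange T A)
    (hinv : ∀ y ∈ Ico (0 : ℝ) 1, (T y ∈ R ↔ y ∈ R)) (hopen : ∀ u ∉ R, ∀ᶠ v in 𝓝[>] u, v ∉ R)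
    {u : ℝ} (hu : u ∈ gapStarts R) : ∃ n, ∃ b ∈ insert 0 A, T^[n + 1] b = u := by
  by_contra! hA
  have huI := Ioo_subset_Ico_self hu.1
  obtain ⟨p, hinj, hp0, hpI, hp⟩ := h.exists_backward_orbit huI
  have hnotMem : ∀ n, p (n + 1) ∉ insert 0 A := fun n hn =>
    hA n _ hn (by rw [← hp0, ← iterate_apply_of_backward_orbit hp 0 (n + 1), zero_add])
  have hgap : ∀ n, p n ∈ gapStarts R := by
    intro n
    induction n with
    | zero => rwa [hp0]
    | succ n ih => rwa [← h.map_mem_gapStarts_iff hinv (hpI _) (hnotMem n), hp]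
  refine false_of_gaps_propagate (B := insert 1 (T '' insert 0 A))
    (((h.finite.insert 0).image T).insert 1) hinj hgap
    ((Metric.isBounded_Ico 0 1).subset (range_subset_iff.2 hpI))
    (fun n => eventually_notMem_gapStarts (hopen _ (hgap n).2.1)) ?_
  intro n δ hS hB
  rw [← hp n] at hS hB
  refine disjoint_right.2 fun w hw hwS => ?_
  obtain ⟨hwI, hTw⟩ := h.apply_mem_Ioo (hpI _) hB hw
  have hwA : w ∉ insert 0 A := fun hwA =>
    disjoint_left.1 hB (mem_insert_of_mem 1 (mem_image_of_mem T hwA)) hTw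
  exact disjoint_left.1 hS ((h.map_mem_gapStarts_iff hinv hwI hwA).2 hwS) hTw

lemma gapStarts_eq_empty (h : RegularExchange T A)
    (hinv : ∀ y ∈ Ico (0 : ℝ) 1, (T y ∈ R ↔ y ∈ R)) (hopen : ∀ u ∉ R, ∀ᶠ v in 𝓝[>] u, v ∉ R) :
    gapStarts R = ∅ := by
  refine eq_empty_of_forall_notMem fun u hu => ?_
  obtain ⟨m, hm⟩ := h.exists_iterate_mem_of_mem_gapStarts hinv hopen hu
  obtain ⟨n, b, hb, rfl⟩ := h.exists_iterate_eq_of_mem_gapStarts hinv hopen hu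
  rw [← iterate_add_apply] at hm
  have := h.eq_zero_of_iterate_mem_of_mem_insert hb hm
  omega

end GapStarts

/-! ### Minimality -/

lemma notMem_rightLimits_of_le (h : RegularExchange T A) {x y z : ℝ} (hx : x ∈ Ico (0 : ℝ) 1)
    (hz : 0 ≤ z) (hzy : z ≤ y) (hy : y < 1) (hyR : y ∉ rightLimits T x) :
    z ∉ rightLimits T x := by
  intro hzR
  set S := rightLimits T x ∩ Icc z y
  have hlub : IsLUB S (sSup S) :=
    isLUB_csSup ⟨z, hzR, le_rfl, hzy⟩ (bddAbove_Icc.mono inter_subset_right)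
  have hzu : z ≤ sSup S := hlub.1 ⟨hzR, le_rfl, hzy⟩
  have huy : sSup S ≤ y := hlub.2 fun v hv => hv.2.2
  by_cases huR : sSup S ∈ rightLimits T x
  · have hright : ∃ᶠ v in 𝓝[>] (sSup S), v ∈ rightLimits T x := huR.mono fun v hv => by
      obtain ⟨n, rfl⟩ := hv
      exact (h.iterate_mem_rightLimits_iff hx hx n).2 (h.mem_rightLimits_self hx)
    obtain ⟨v, hvR, huv, hvy⟩ := (hright.and_eventually (Ioo_mem_nhdsGT
      (huy.lt_of_ne (ne_of_mem_of_not_mem huR hyR)))).exists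
    exact huv.not_ge (hlub.1 ⟨hvR, hzu.trans huv.le, hvy.le⟩)
  · have hleft : ∃ᶠ v in 𝓝[<] (sSup S), v ∈ rightLimits T x := by
      intro hev
      obtain ⟨l, hlu, hl⟩ := mem_nhdsLT_iff_exists_Ioo_subset.1 hev
      obtain ⟨v, hv, hlv⟩ := (lt_isLUB_iff hlub).1 hlu
      exact hl ⟨hlv, (hlub.1 hv).lt_of_ne (ne_of_mem_of_not_mem hv.1 huR)⟩ hv.1
    have hpos : 0 < sSup S := hz.trans_lt (hzu.lt_of_ne (ne_of_mem_of_not_mem hzR huR))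
    have hu : sSup S ∈ gapStarts (rightLimits T x) := ⟨⟨hpos, huy.trans_lt hy⟩, huR, hleft⟩
    rwa [h.gapStarts_eq_empty (fun v hv => h.map_mem_rightLimits_iff hx hv)
      fun v hv => eventually_notMem_rightLimits hv] at hu

lemma mem_rightLimits (h : RegularExchange T A) {x y : ℝ} (hx : x ∈ Ico (0 : ℝ) 1)
    (hy : y ∈ Ico (0 : ℝ) 1) : y ∈ rightLimits T x := by
  have h0 : (0 : ℝ) ∈ Ico (0 : ℝ) 1 := ⟨le_rfl, one_pos⟩
  have hx0 : x ∈ rightLimits T 0 := by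
    by_contra hx0
    exact h.notMem_rightLimits_of_le h0 le_rfl hx.1 hx.2 hx0 (h.mem_rightLimits_self h0)
  obtain ⟨_, ⟨n, rfl⟩, hxn⟩ := (hx0.and_eventually self_mem_nhdsWithin).exists
  by_contra hyR
  have h0R : T^[n] 0 ∉ rightLimits T x := (h.iterate_mem_rightLimits_iff hx h0 n).not.2
    (h.notMem_rightLimits_of_le hx le_rfl hy.1 hy.2 hyR)
  exact h.notMem_rightLimits_of_le hx hx.1 (le_of_lt hxn) (h.iterate_mem n h0).2 h0R
    (h.mem_rightLimits_self hx)

end RegularExchange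

/-! ### Factors -/

lemma setOf_isFactor_eq_range {α : Type*} (U : ℕ → α) (n : ℕ) :
    {w : List α | w.length = n ∧ IsFactor U w} =
      range fun i => List.ofFn fun j : Fin n => U (i + j) := by
  ext w
  constructor
  · rintro ⟨rfl, i, hi⟩
    exact ⟨i, (congrArg List.ofFn (funext hi)).trans (List.ofFn_get w)⟩
  · rintro ⟨i, rfl⟩
    exact ⟨List.length_ofFn, i, fun j => by simp⟩

lemma complexity_of_subsingleton {α : Type*} [Subsingleton α] (U : ℕ → α) (n : ℕ) :
    Complexity U n = 1 := by
  rw [Complexity, setOf_isFactor_eq_range, ncard_eq_one]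
  exact ⟨_, (range_eq_singleton_iff (y := List.ofFn fun j : Fin n => U j)).2
    fun i => congrArg List.ofFn (Subsingleton.elim _ _)⟩

/-- `code` labels the points of `[0, 1)` by the intervals into which `A` cuts it: two points have
the same label if and only if no point of `A` separates them. -/
def IsIntervalLabelling {α : Type*} (A : Set ℝ) (code : ℝ → α) : Prop :=
  ∀ ⦃y z⦄, y ∈ Ico (0 : ℝ) 1 → z ∈ Ico (0 : ℝ) 1 → y ≤ z →
    (code y = code z ↔ Disjoint A (Ioc y z))

/-- The word formed by the labels of the first `n` points of the orbit of `y`. -/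
def itinerary {α : Type*} (T : ℝ → ℝ) (code : ℝ → α) (n : ℕ) (y : ℝ) : List α :=
  List.ofFn fun j : Fin n => code (T^[j] y)

lemma itinerary_succ_eq_iff {α : Type*} {T : ℝ → ℝ} {code : ℝ → α} {n : ℕ} {y z : ℝ} :
    itinerary T code (n + 1) y = itinerary T code (n + 1) z ↔
      itinerary T code n y = itinerary T code n z ∧ code (T^[n] y) = code (T^[n] z) := by
  simp only [itinerary, List.ofFn_inj, funext_iff, Fin.forall_fin_succ', Fin.val_castSucc,
    Fin.val_last]

namespace RegularExchange

variable {T : ℝ → ℝ} {A : Set ℝ} {α : Type*} {code : ℝ → α}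

lemma itinerary_eq_iff (h : RegularExchange T A) (hcode : IsIntervalLabelling A code) {n : ℕ}
    {y z : ℝ} (hy : y ∈ Ico (0 : ℝ) 1) (hz : z ∈ Ico (0 : ℝ) 1) (hyz : y ≤ z) :
    itinerary T code n y = itinerary T code n z ↔ Disjoint (cylinderStarts T A n) (Ioc y z) := by
  induction n with
  | zero => simp [itinerary, cylinderStarts_zero, hy.1]
  | succ n ih =>
    rw [itinerary_succ_eq_iff, cylinderStarts_succ, disjoint_union_left, ih]
    refine and_congr_right fun hdisj => ?_
    have htrans : ∀ w ∈ Icc y z, T^[n] w - T^[n] y = w - y := fun w hw =>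
      h.iterate_sub_eq hy ⟨hy.1.trans hw.1, hw.2.trans_lt hz.2⟩ hw.1
        (hdisj.mono_right (Ioc_subset_Ioc_right hw.2))
    rw [hcode (h.iterate_mem n hy) (h.iterate_mem n hz) (by linarith [htrans z ⟨hyz, le_rfl⟩]),
      disjoint_Ioc_iterate_iff hy.1 hz.2 hyz htrans]

lemma injOn_itinerary_cylinderStarts (h : RegularExchange T A)
    (hcode : IsIntervalLabelling A code) (n : ℕ) :
    InjOn (itinerary T code n) (cylinderStarts T A n) := by
  intro p hp q hq hpq
  wlog hle : p ≤ q generalizing p q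
  · exact (this hq hp hpq.symm (le_of_not_ge hle)).symm
  by_contra hne
  exact disjoint_left.1 ((h.itinerary_eq_iff hcode hp.1 hq.1 hle).1 hpq) hq
    ⟨hle.lt_of_ne hne, le_rfl⟩

lemma range_itinerary_iterate (h : RegularExchange T A) (hcode : IsIntervalLabelling A code)
    {x : ℝ} (hx : x ∈ Ico (0 : ℝ) 1) (n : ℕ) :
    (range fun i => itinerary T code n (T^[i] x)) =
      itinerary T code n '' cylinderStarts T A n := by
  apply Subset.antisymm
  · rintro _ ⟨i, rfl⟩
    have hi := h.iterate_mem i hx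
    obtain ⟨p, hp, hpi, hdisj⟩ := h.exists_cylinderStart_le n hi
    exact ⟨p, hp, (h.itinerary_eq_iff hcode hp.1 hi hpi).2 hdisj⟩
  · rintro _ ⟨p, hp, rfl⟩
    have hright : ∀ᶠ z in 𝓝[>] p, p < z ∧ Disjoint (cylinderStarts T A n) (Ioc p z) :=
      eventually_mem_nhdsWithin.and (eventually_disjoint_Ioc_right (h.finite_cylinderStarts n) p)
    obtain ⟨_, ⟨i, rfl⟩, hpi, hdisj⟩ := ((h.mem_rightLimits hx hp.1).and_eventually hright).exists
    exact ⟨i, ((h.itinerary_eq_iff hcode hp.1 (h.iterate_mem i hx) hpi.le).2 hdisj).symm⟩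

theorem complexity_eq (h : RegularExchange T A) (hcode : IsIntervalLabelling A code) {x : ℝ}
    (hx : x ∈ Ico (0 : ℝ) 1) (n : ℕ) :
    Complexity (fun j => code (T^[j] x)) n = n * A.ncard + 1 := by
  have hword : ∀ i, (List.ofFn fun j : Fin n => code (T^[i + j] x)) =
      itinerary T code n (T^[i] x) := fun i => by
    simp only [itinerary, ← iterate_add_apply, add_comm]
  rw [Complexity, setOf_isFactor_eq_range, funext hword, h.range_itinerary_iterate hcode hx,
    (h.injOn_itinerary_cylinderStarts hcode n).ncard_image, h.ncard_cylinderStarts]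

end RegularExchange

/-! ### Interval exchange transformations -/

section IntervalPartition

variable {k : ℕ} {lam : Fin k → ℝ}

/-- The total length of the first `n` intervals. Indexing by `ℕ` rather than `Fin k` gives every
interval, the last one included, a right end point. -/
noncomputable def partialLength (lam : Fin k → ℝ) (n : ℕ) : ℝ :=
  ∑ j ∈ Finset.univ.filter fun j : Fin k => (j : ℕ) < n, lam j

lemma leftPt_eq_partialLength (lam : Fin k → ℝ) (i : Fin k) : leftPt lam i = partialLength lam i :=
  rfl

lemma partialLength_zero (lam : Fin k → ℝ) : partialLength lam 0 = 0 := by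
  simp [partialLength]

lemma partialLength_length (lam : Fin k → ℝ) : partialLength lam k = ∑ i, lam i := by
  simp [partialLength]

lemma partialLength_succ (lam : Fin k → ℝ) (i : Fin k) :
    partialLength lam (i + 1) = partialLength lam i + lam i := by
  rw [partialLength, partialLength, add_comm (Finset.sum _ _), ← Finset.sum_insert (by simp)]
  congr 1
  ext j
  simp only [Finset.mem_insert, Finset.mem_filter, Finset.mem_univ, true_and, Fin.ext_iff]
  omega

lemma partialLength_mono (hpos : ∀ i, 0 < lam i) : Monotone (partialLength lam) := fun _ _ hmn =>
  Finset.sum_le_sum_of_subset_of_nonneg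
    (Finset.monotone_filter_right _ fun _ _ hj => hj.trans_le hmn) fun j _ _ => (hpos j).le

lemma Xint_eq_Ico_partialLength (lam : Fin k → ℝ) (i : Fin k) :
    Xint lam i = Ico (partialLength lam i) (partialLength lam (i + 1)) := by
  rw [Xint, partialLength_succ, leftPt_eq_partialLength]

lemma leftPt_mem_Xint (hpos : ∀ i, 0 < lam i) (i : Fin k) : leftPt lam i ∈ Xint lam i :=
  ⟨le_rfl, lt_add_of_pos_right _ (hpos i)⟩

lemma Xint_subset (hpos : ∀ i, 0 < lam i) (hsum : ∑ i, lam i = 1) (i : Fin k) :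
    Xint lam i ⊆ Ico 0 1 := by
  rw [Xint_eq_Ico_partialLength, ← hsum, ← partialLength_zero lam, ← partialLength_length]
  exact Ico_subset_Ico (partialLength_mono hpos (Nat.zero_le _)) (partialLength_mono hpos i.isLt)

lemma exists_mem_Xint (hsum : ∑ i, lam i = 1) {y : ℝ} (hy : y ∈ Ico (0 : ℝ) 1) :
    ∃ i, y ∈ Xint lam i := by
  rw [← hsum, ← partialLength_zero lam, ← partialLength_length] at hy
  obtain ⟨i, hi, hyi⟩ := mem_iUnion₂.1 (Ico_subset_biUnion_Ico k (partialLength lam) hy)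
  refine ⟨⟨i, Finset.mem_range.1 hi⟩, ?_⟩
  rwa [Xint_eq_Ico_partialLength]

lemma le_of_mem_Xint (hpos : ∀ i, 0 < lam i) {i j : Fin k} {y z : ℝ} (hy : y ∈ Xint lam i)
    (hz : z ∈ Xint lam j) (hyz : y ≤ z) : i ≤ j := by
  rw [Xint_eq_Ico_partialLength] at hy hz
  by_contra! hji
  exact (hz.2.trans_le (partialLength_mono hpos hji)).not_ge (hy.1.trans hyz)

lemma eq_of_mem_Xint (hpos : ∀ i, 0 < lam i) {i j : Fin k} {y : ℝ} (hi : y ∈ Xint lam i)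
    (hj : y ∈ Xint lam j) : i = j :=
  le_antisymm (le_of_mem_Xint hpos hi hj le_rfl) (le_of_mem_Xint hpos hj hi le_rfl)

lemma leftPt_injective (hpos : ∀ i, 0 < lam i) : Injective (leftPt lam) := fun i j hij =>
  eq_of_mem_Xint hpos (leftPt_mem_Xint hpos i) (hij ▸ leftPt_mem_Xint hpos j)

variable [NeZero k]

lemma leftPt_zero (lam : Fin k → ℝ) : leftPt lam 0 = 0 := by
  rw [leftPt_eq_partialLength, Fin.val_zero, partialLength_zero]

/-- The end points `a_2, …, a_k` of the exchanged intervals that are interior to `[0, 1)`. -/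
def separators (lam : Fin k → ℝ) : Set ℝ :=
  leftPt lam '' {0}ᶜ

lemma insert_zero_separators (lam : Fin k → ℝ) :
    insert 0 (separators lam) = range (leftPt lam) := by
  rw [separators, ← leftPt_zero lam, ← image_insert_eq, insert_eq, union_compl_self, image_univ]

lemma ncard_separators (hpos : ∀ i, 0 < lam i) : (separators lam).ncard = k - 1 := by
  rw [separators, ncard_image_of_injective _ (leftPt_injective hpos), ncard_compl, ncard_singleton,
    Nat.card_fin]

lemma separators_subset_Ioo (hpos : ∀ i, 0 < lam i) (hsum : ∑ i, lam i = 1) :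
    separators lam ⊆ Ioo 0 1 := by
  rintro _ ⟨i, hi, rfl⟩
  have hmem := Xint_subset hpos hsum i (leftPt_mem_Xint hpos i)
  refine ⟨hmem.1.lt_of_ne fun h0 => hi (leftPt_injective hpos ?_), hmem.2⟩
  rw [leftPt_zero, h0]

lemma eq_iff_disjoint_separators (hpos : ∀ i, 0 < lam i) {i j : Fin k} {y z : ℝ}
    (hy : y ∈ Xint lam i) (hz : z ∈ Xint lam j) (hyz : y ≤ z) :
    i = j ↔ Disjoint (separators lam) (Ioc y z) := by
  rw [disjoint_left]
  constructor
  · rintro rfl _ ⟨l, -, rfl⟩ hl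
    have hil := le_of_mem_Xint hpos hy (leftPt_mem_Xint hpos l) hl.1.le
    have hli := le_of_mem_Xint hpos (leftPt_mem_Xint hpos l) hz hl.2
    obtain rfl := le_antisymm hil hli
    exact hl.1.not_ge hy.1
  · intro hdisj
    have hij := le_of_mem_Xint hpos hy hz hyz
    by_contra hne
    have hlt := hij.lt_of_ne hne
    refine hdisj (mem_image_of_mem _ (hlt.trans_le' (Fin.zero_le _)).ne') ⟨?_, hz.1⟩
    rw [Xint_eq_Ico_partialLength] at hy
    exact hy.2.trans_le (partialLength_mono hpos hlt)

end IntervalPartition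

namespace IsIET

variable {k : ℕ} {lam : Fin k → ℝ} {σ : Equiv.Perm (Fin k)} {T : ℝ → ℝ}

lemma pos_comp (hT : IsIET lam σ T) (i : Fin k) : 0 < (lam ∘ σ) i :=
  hT.1 _

lemma sum_comp (hT : IsIET lam σ T) : ∑ i, (lam ∘ σ) i = 1 :=
  (Equiv.sum_comp σ lam).trans hT.2.1

lemma apply_eq (hT : IsIET lam σ T) {i : Fin k} {y : ℝ} (hy : y ∈ Xint lam i) :
    T y = leftPt (lam ∘ σ) (σ.symm i) + (y - leftPt lam i) := by
  rw [hT.2.2.1 i y hy, transAmt, add_sub_left_comm]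
  rfl

lemma apply_mem_Xint (hT : IsIET lam σ T) {i : Fin k} {y : ℝ} (hy : y ∈ Xint lam i) :
    T y ∈ Xint (lam ∘ σ) (σ.symm i) := by
  rw [hT.apply_eq hy, Xint, comp_apply, Equiv.apply_symm_apply]
  exact ⟨by linarith [hy.1], by linarith [hy.2]⟩

lemma apply_sub_apply (hT : IsIET lam σ T) {i : Fin k} {y z : ℝ} (hy : y ∈ Xint lam i)
    (hz : z ∈ Xint lam i) : T z - T y = z - y := by
  rw [hT.apply_eq hy, hT.apply_eq hz]
  ring

lemma apply_leftPt (hT : IsIET lam σ T) (i : Fin k) :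
    T (leftPt lam (σ i)) = leftPt (lam ∘ σ) i := by
  rw [hT.apply_eq (leftPt_mem_Xint hT.1 _), sub_self, add_zero, Equiv.symm_apply_apply]

lemma bijOn (hT : IsIET lam σ T) : BijOn T (Ico 0 1) (Ico 0 1) := by
  refine ⟨fun y hy => ?_, fun y hy z hz hyz => ?_, fun w hw => ?_⟩
  · obtain ⟨i, hi⟩ := exists_mem_Xint hT.2.1 hy
    exact Xint_subset hT.pos_comp hT.sum_comp _ (hT.apply_mem_Xint hi)
  · obtain ⟨i, hi⟩ := exists_mem_Xint hT.2.1 hy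
    obtain ⟨j, hj⟩ := exists_mem_Xint hT.2.1 hz
    obtain rfl : i = j := σ.symm.injective
      (eq_of_mem_Xint hT.pos_comp (hT.apply_mem_Xint hi) (hyz ▸ hT.apply_mem_Xint hj))
    linarith [hT.apply_sub_apply hi hj]
  · obtain ⟨i, hi, hw_lt⟩ := exists_mem_Xint hT.sum_comp hw
    rw [comp_apply] at hw_lt
    have hmem : leftPt lam (σ i) + (w - leftPt (lam ∘ σ) i) ∈ Xint lam (σ i) :=
      ⟨by linarith, by linarith⟩
    refine ⟨_, Xint_subset hT.1 hT.2.1 _ hmem, ?_⟩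
    linarith [hT.apply_sub_apply (leftPt_mem_Xint hT.1 _) hmem, hT.apply_leftPt i]

variable [NeZero k]

lemma image_insert_zero_separators (hT : IsIET lam σ T) :
    T '' insert 0 (separators lam) = insert 0 (separators (lam ∘ σ)) := by
  rw [insert_zero_separators, insert_zero_separators, ← σ.surjective.range_comp, ← range_comp]
  exact congrArg range (funext hT.apply_leftPt)

/- If `σ` fixed the first interval, `T` would send the left end point of the interval that comes
second in the image to `a_2`. -/
lemma perm_zero_ne_zero (hT : IsIET lam σ T) (hreg : KeaneRegular lam T) (hk : 1 < k) :
    σ 0 ≠ 0 := by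
  intro hσ
  have hsecond : ∀ l : Fin k → ℝ, leftPt l ⟨1, hk⟩ = l 0 := fun l => by
    simpa [leftPt_eq_partialLength, partialLength_zero] using partialLength_succ l 0
  have hne : (⟨1, hk⟩ : Fin k) ≠ 0 := by simp [Fin.ext_iff]
  have hσne : σ ⟨1, hk⟩ ≠ 0 := fun hσ1 => hne (σ.injective (hσ1.trans hσ.symm))
  refine one_ne_zero (hreg 1 _ ⟨1, hk⟩ (Fin.val_ne_zero_iff.2 hσne) one_ne_zero ?_).1
  rw [iterate_one, hT.apply_leftPt, hsecond, hsecond, comp_apply, hσ]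

lemma regularExchange (hT : IsIET lam σ T) (hreg : KeaneRegular lam T) (hk : 1 < k) :
    RegularExchange T (separators lam) where
  finite := (toFinite _).image _
  subset_Ioo := separators_subset_Ioo hT.1 hT.2.1
  bijOn := hT.bijOn
  sub_eq y z hy hz hyz hdisj := by
    obtain ⟨i, hi⟩ := exists_mem_Xint hT.2.1 hy
    obtain ⟨j, hj⟩ := exists_mem_Xint hT.2.1 hz
    obtain rfl := (eq_iff_disjoint_separators hT.1 hi hj hyz).2 hdisj
    exact hT.apply_sub_apply hi hj
  sub_eq_of_image y z hy hz hyz hdisj := by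
    obtain ⟨i, hi⟩ := exists_mem_Xint hT.2.1 hy
    obtain ⟨j, hj⟩ := exists_mem_Xint hT.2.1 hz
    rw [hT.image_insert_zero_separators, disjoint_insert_left] at hdisj
    obtain rfl : i = j := σ.symm.injective ((eq_iff_disjoint_separators hT.pos_comp
      (hT.apply_mem_Xint hi) (hT.apply_mem_Xint hj) hyz).2 hdisj.2)
    exact hT.apply_sub_apply hi hj
  zero_mem_image :=
    ⟨_, mem_image_of_mem _ (hT.perm_zero_ne_zero hreg hk), by rw [hT.apply_leftPt, leftPt_zero]⟩
  eq_zero_of_iterate_mem := by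
    rintro n _ ⟨i, hi, rfl⟩ ⟨j, hj, hij⟩
    exact (hreg n i j (Fin.val_ne_zero_iff.2 hi) (Fin.val_ne_zero_iff.2 hj) hij.symm).1

end IsIET

/-- the coding of a point under a regular interval exchange on `k`
intervals has complexity `p(n) = n(k-1) + 1` for all `n ≥ 1`. -/
theorem complexity_of_regular_iet_coding
    (k : ℕ) (lam : Fin k → ℝ) (σ : Equiv.Perm (Fin k)) (T : ℝ → ℝ)
    (hT : IsIET lam σ T) (hreg : KeaneRegular lam T)
    (x : ℝ) (hx : x ∈ Set.Ico (0:ℝ) 1)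
    (U : ℕ → Fin k) (hU : IsCoding lam T x U) :
    ∀ n : ℕ, 1 ≤ n → Complexity U n = n * (k - 1) + 1 := by
  intro n _
  have : NeZero k := ⟨(U 0).pos.ne'⟩
  rcases (NeZero.one_le (n := k)).eq_or_lt with rfl | hk
  · simpa using complexity_of_subsingleton U n
  have h := hT.regularExchange hreg hk
  choose! code hcode using fun y hy => exists_mem_Xint (y := y) hT.2.1 hy
  have hU_code : U = fun j => code (T^[j] x) :=
    funext fun j => eq_of_mem_Xint hT.1 (hU j) (hcode _ (h.iterate_mem j hx))
  have hlabel : IsIntervalLabelling (separators lam) code := fun y z hy hz hyz =>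
    eq_iff_disjoint_separators hT.1 (hcode y hy) (hcode z hz) hyz
  rw [hU_code, h.complexity_eq hlabel hx, ncard_separators hT.1]
end

section
/- Let u be the coding of a rotation by irrational α on the circle with respect to a partition into k intervals whose lengths are rationally independent, and suppose one of the intervals has length α. Then for every factor w of u, the number of return words over w is exactly k (property R_k). -/
/-! Rotate the partition so that the interval of length `α` ends at `1`. The rotation then is an
interval exchange, translating each interval of the rotated partition, and rational independence of
the lengths gives Keane's condition: the left ends of the intervals, apart from `0`, lie on distinct
infinite orbits.

For a minimal interval exchange with Keane's condition, let `J` be the set of points whose coding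
starts with `w`, and let `a` be its least element. The points of `J` with a given return word form
an interval, so that return words correspond to the left ends of these intervals. A point of `J` is
such a left end if it is `a` or if its orbit, up to the end of the next occurrence of `w`, hits the
left end of one of the exchanged intervals. By Kakutani's skyscraper construction, every point of
the circle is hit before the return to `J` by the orbit of exactly one point of `J`. So associate to
each exchanged interval the point of `J` whose orbit hits its left end, with two modifications: the
left end `0` is replaced by `a`, and the left end that is reached from the preimage of `a` while `w`
is read is replaced by that preimage. This is a bijection from the `k` intervals to the return
words. -/

open Set

section Skyscraper

variable {X : Type*} (T : Equiv.Perm X) (J : Set X) {x y : X} {m n : ℕ}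

/-- Every forward orbit of `T` meets `J`. -/
def IsSweepOut : Prop := ∀ x, ∃ n : ℕ, (T ^ n) x ∈ J

/-- The time of the first return of `x` to `J` under `T`; it is `0` if `x` never returns. -/
noncomputable def returnTime (x : X) : ℕ := sInf {n | 0 < n ∧ (T ^ n) x ∈ J}

variable {T J}

theorem pow_notMem_of_lt_returnTime (hn : 0 < n) (h : n < returnTime T J x) : (T ^ n) x ∉ J :=
  fun hmem => Nat.notMem_of_lt_sInf h ⟨hn, hmem⟩

theorem returnTime_eq (hn : 0 < n) (hmem : (T ^ n) x ∈ J)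
    (hfirst : ∀ m, 0 < m → m < n → (T ^ m) x ∉ J) : returnTime T J x = n :=
  IsLeast.csInf_eq ⟨⟨hn, hmem⟩, fun m hm => not_lt.1 (hfirst m hm.1 · hm.2)⟩

theorem IsSweepOut.returnTime_spec (hJ : IsSweepOut T J) (x : X) :
    0 < returnTime T J x ∧ (T ^ returnTime T J x) x ∈ J := by
  obtain ⟨n, hn⟩ := hJ (T x)
  exact Nat.sInf_mem (s := {n | 0 < n ∧ (T ^ n) x ∈ J})
    ⟨n + 1, n.succ_pos, by rwa [pow_succ, Equiv.Perm.mul_apply]⟩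

-- Kakutani's skyscraper: `X` is the disjoint union of the towers `{T ^ n x | n < returnTime T J x}`
-- over the points `x` of `J`.
theorem exists_lt_returnTime_pow_eq (hJ : IsSweepOut T J) (hJ' : IsSweepOut T⁻¹ J) (y : X) :
    ∃ x ∈ J, ∃ n < returnTime T J x, (T ^ n) x = y := by
  classical
  have hpow : ∀ n, (T ^ n) ((T⁻¹ ^ n) y) = y := fun n => by simp
  set n := Nat.find (hJ' y)
  refine ⟨_, Nat.find_spec (hJ' y), n, ?_, hpow n⟩
  obtain ⟨hpos, hmem⟩ := hJ.returnTime_spec ((T⁻¹ ^ n) y)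
  set r := returnTime T J ((T⁻¹ ^ n) y)
  by_contra! hrn
  refine Nat.find_min (hJ' y) (Nat.sub_lt (hpos.trans_le hrn) hpos) ?_
  have : (T⁻¹ ^ (n - r)) y = (T ^ r) ((T⁻¹ ^ n) y) := by
    rw [← Nat.sub_add_cancel hrn, add_comm, pow_add, Equiv.Perm.mul_apply, Nat.add_sub_cancel_left]
    simp
  rwa [this]

theorem eq_of_pow_eq_pow_of_lt_returnTime (hx : x ∈ J) (hy : y ∈ J) (hm : m < returnTime T J x)
    (hn : n < returnTime T J y) (h : (T ^ m) x = (T ^ n) y) : x = y := by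
  wlog hmn : m ≤ n generalizing x y m n
  · exact (this hy hx hn hm h.symm (le_of_not_ge hmn)).symm
  obtain ⟨s, rfl⟩ := Nat.exists_eq_add_of_le hmn
  have hxs : x = (T ^ s) y := by
    rwa [pow_add, Equiv.Perm.mul_apply, EmbeddingLike.apply_eq_iff_eq] at h
  obtain rfl | hs := Nat.eq_zero_or_pos s
  · exact hxs
  · exact absurd (hxs ▸ hx) (pow_notMem_of_lt_returnTime hs (by omega))

end Skyscraper

/-- Every forward orbit of `T` meets every interval `[a, b)`. -/
def HasDenseOrbits {X : Type*} [Preorder X] (T : Equiv.Perm X) : Prop :=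
  ∀ x a b : X, a < b → ∃ n : ℕ, (T ^ n) x ∈ Ico a b

/-- A generalized interval exchange with intervals labelled by `A`: a permutation of a linear order
which is strictly increasing on each of the intervals `code ⁻¹' {l}`, maps them onto intervals, and
these intervals contain their left end `left l` but have no right end. -/
structure IntervalExchange (X A : Type*) [LinearOrder X] where
  map : Equiv.Perm X
  code : X → A
  left : A → X
  isLeast_left : ∀ l, IsLeast (code ⁻¹' {l}) (left l)
  ordConnected_fiber : ∀ l, (code ⁻¹' {l}).OrdConnected
  exists_gt_code_eq : ∀ x, ∃ y > x, code x = code y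
  strictMonoOn_map : ∀ l, StrictMonoOn map (code ⁻¹' {l})
  ordConnected_image : ∀ l, (map '' (code ⁻¹' {l})).OrdConnected

namespace IntervalExchange

section LinearOrder

variable {X A : Type*} [LinearOrder X] (E : IntervalExchange X A) {x y z : X} {l : A} {m n : ℕ}
  {w : List A}

theorem code_left (l : A) : E.code (E.left l) = l := (E.isLeast_left l).1

theorem left_code_le (x : X) : E.left (E.code x) ≤ x := (E.isLeast_left _).2 rfl

theorem left_injective : Function.Injective E.left :=
  Function.LeftInverse.injective E.code_left

/-- The coding of the forward orbit of `x`. -/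
def word (x : X) (n : ℕ) : A := E.code ((E.map ^ n) x)

theorem word_pow (x : X) (m n : ℕ) : E.word ((E.map ^ m) x) n = E.word x (n + m) := by
  rw [word, word, pow_add, Equiv.Perm.mul_apply]

theorem map_pow_succ (x : X) (n : ℕ) : (E.map ^ (n + 1)) x = E.map ((E.map ^ n) x) := by
  rw [pow_succ', Equiv.Perm.mul_apply]

/-- The codings of `x` and `y` have the same first `n` letters. -/
def Agree (n : ℕ) (x y : X) : Prop := ∀ t < n, E.word x t = E.word y t

variable {E}

theorem Agree.symm (h : E.Agree n x y) : E.Agree n y x := fun t ht => (h t ht).symm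

theorem Agree.trans (h : E.Agree n x y) (h' : E.Agree n y z) : E.Agree n x z :=
  fun t ht => (h t ht).trans (h' t ht)

theorem Agree.mono (h : E.Agree n x y) (hmn : m ≤ n) : E.Agree m x y :=
  fun t ht => h t (ht.trans_le hmn)

theorem agree_succ_iff : E.Agree (n + 1) x y ↔ E.Agree n x y ∧ E.word x n = E.word y n :=
  Nat.forall_lt_succ_right

theorem agree_add_iff :
    E.Agree (m + n) x y ↔ E.Agree n x y ∧ E.Agree m ((E.map ^ n) x) ((E.map ^ n) y) := by
  simp only [Agree, word_pow]
  refine ⟨fun h => ⟨fun t ht => h t (by omega), fun t ht => h _ (by omega)⟩,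
    fun ⟨h, h'⟩ t ht => ?_⟩
  obtain htn | hnt := lt_or_ge t n
  · exact h t htn
  · simpa only [Nat.sub_add_cancel hnt] using h' (t - n) (by omega)

theorem Agree.pow_le_pow_iff (h : E.Agree n x y) (hmn : m ≤ n) :
    (E.map ^ m) x ≤ (E.map ^ m) y ↔ x ≤ y := by
  induction m with
  | zero => rfl
  | succ m ih =>
    rw [map_pow_succ, map_pow_succ, (E.strictMonoOn_map _).le_iff_le (h m hmn) rfl]
    exact ih (Nat.le_of_succ_le hmn)

theorem Agree.of_mem_Icc (h : E.Agree n x z) (hy : y ∈ Icc x z) : E.Agree n x y := by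
  induction n with
  | zero => exact fun t ht => absurd ht t.not_lt_zero
  | succ n ih =>
    obtain ⟨hxz, hcode⟩ := agree_succ_iff.1 h
    have hxy := ih hxz
    have hyz := hxy.symm.trans hxz
    exact agree_succ_iff.2 ⟨hxy, ((E.ordConnected_fiber _).out rfl hcode.symm
      ⟨(hxy.pow_le_pow_iff le_rfl).2 hy.1, (hyz.pow_le_pow_iff le_rfl).2 hy.2⟩).symm⟩

theorem Agree.of_pow_mem_Icc (h : E.Agree n x z)
    (hy : (E.map ^ n) y ∈ Icc ((E.map ^ n) x) ((E.map ^ n) z)) : E.Agree n x y := by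
  induction n with
  | zero => exact fun t ht => absurd ht t.not_lt_zero
  | succ n ih =>
    obtain ⟨hxz, hcode⟩ := agree_succ_iff.1 h
    rw [map_pow_succ, map_pow_succ, map_pow_succ] at hy
    obtain ⟨v, hv, hvy⟩ := (E.ordConnected_image _).out (mem_image_of_mem _ rfl)
      (mem_image_of_mem _ hcode.symm) hy
    obtain rfl : v = (E.map ^ n) y := E.map.injective hvy
    have hmono := E.strictMonoOn_map (E.word x n)
    exact agree_succ_iff.2 ⟨ih hxz ⟨(hmono.le_iff_le rfl hv).1 hy.1,
      (hmono.le_iff_le hv hcode.symm).1 hy.2⟩, hv.symm⟩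

theorem exists_gt_agree (x : X) (n : ℕ) : ∃ y > x, E.Agree n x y := by
  induction n with
  | zero =>
    obtain ⟨y, hxy, -⟩ := E.exists_gt_code_eq x
    exact ⟨y, hxy, fun t ht => absurd ht t.not_lt_zero⟩
  | succ n ih =>
    obtain ⟨y, hxy, hagree⟩ := ih
    obtain ⟨c, hc, hcode⟩ := E.exists_gt_code_eq ((E.map ^ n) x)
    obtain hyc | hcy := le_total ((E.map ^ n) y) c
    · exact ⟨y, hxy, agree_succ_iff.2 ⟨hagree, ((E.ordConnected_fiber _).out rfl hcode.symm
        ⟨(hagree.pow_le_pow_iff le_rfl).2 hxy.le, hyc⟩).symm⟩⟩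
    · obtain ⟨v, rfl⟩ := (E.map ^ n).surjective c
      have hv : E.Agree n x v := hagree.of_pow_mem_Icc ⟨le_of_lt hc, hcy⟩
      exact ⟨v, lt_of_not_ge fun hvx => hc.not_ge ((hv.symm.pow_le_pow_iff le_rfl).2 hvx),
        agree_succ_iff.2 ⟨hv, hcode⟩⟩

variable (E) in
/-- `x` is the least point whose coding has the same first `n` letters as that of `x`. -/
def IsLeftEnd (n : ℕ) (x : X) : Prop := ∀ y, E.Agree n x y → x ≤ y

theorem IsLeftEnd.mono (h : E.IsLeftEnd m x) (hmn : m ≤ n) : E.IsLeftEnd n x :=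
  fun y hy => h y (hy.mono hmn)

theorem IsLeftEnd.of_pow (h : E.IsLeftEnd m ((E.map ^ n) x)) : E.IsLeftEnd (m + n) x :=
  fun _ hy => (hy.pow_le_pow_iff (Nat.le_add_left n m)).1 (h _ (agree_add_iff.1 hy).2)

theorem isLeftEnd_left (l : A) : E.IsLeftEnd 1 (E.left l) := by
  intro y hy
  have hcode := (hy 0 one_pos).symm.trans (E.code_left l)
  exact (E.isLeast_left l).2 hcode

theorem IsLeftEnd.of_pow_eq_left (h : (E.map ^ m) x = E.left l) (hmn : m < n) :
    E.IsLeftEnd n x :=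
  IsLeftEnd.mono (IsLeftEnd.of_pow (h ▸ isLeftEnd_left l)) (by omega : 1 + m ≤ n)

theorem IsLeftEnd.eq_of_agree (hx : E.IsLeftEnd n x) (hy : E.IsLeftEnd n y)
    (h : E.Agree n x y) : x = y :=
  le_antisymm (hx y h) (hy x h.symm)

theorem occursAt_word_pow :
    OccursAt (E.word ((E.map ^ m) x)) w n ↔ OccursAt (E.word x) w (n + m) := by
  simp only [OccursAt, word_pow, add_right_comm]

variable (E) in
/-- The set of points whose coding starts with `w`. -/
def cylinder (w : List A) : Set X := {x | OccursAt (E.word x) w 0}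

theorem pow_mem_cylinder_iff : (E.map ^ n) x ∈ E.cylinder w ↔ OccursAt (E.word x) w n := by
  rw [cylinder, mem_ofPred_eq, occursAt_word_pow, zero_add]

theorem mem_cylinder_iff_agree (hx : x ∈ E.cylinder w) :
    y ∈ E.cylinder w ↔ E.Agree w.length x y := by
  simp only [cylinder, mem_ofPred_eq, OccursAt, zero_add] at hx ⊢
  exact ⟨fun hy t ht => (hx ⟨t, ht⟩).trans (hy ⟨t, ht⟩).symm,
    fun h t => (h t t.2).symm.trans (hx t)⟩

theorem Agree.mem_cylinder_iff (h : E.Agree w.length x y) :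
    x ∈ E.cylinder w ↔ y ∈ E.cylinder w :=
  ⟨fun hx => (mem_cylinder_iff_agree hx).2 h, fun hy => (mem_cylinder_iff_agree hy).2 h.symm⟩

theorem Agree.pow_mem_cylinder_iff (h : E.Agree (w.length + n) x y) (hmn : m ≤ n) :
    (E.map ^ m) x ∈ E.cylinder w ↔ (E.map ^ m) y ∈ E.cylinder w :=
  (agree_add_iff.1 (h.mono (Nat.add_le_add_left hmn _))).2.mem_cylinder_iff

variable (E) in
/-- The first `n` letters of the coding of `x`, where `n` is the time of the first return of `x` to
the cylinder of `w`. -/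
noncomputable def returnWord (w : List A) (x : X) : List A :=
  List.ofFn fun t : Fin (returnTime E.map (E.cylinder w) x) => E.word x t

theorem returnWord_eq_ofFn (h : returnTime E.map (E.cylinder w) x = n) :
    E.returnWord w x = List.ofFn fun t : Fin n => E.word x t := by
  subst h
  rfl

theorem Agree.returnTime_eq (hw : IsSweepOut E.map (E.cylinder w))
    (h : E.Agree (w.length + returnTime E.map (E.cylinder w) x) x y) :
    returnTime E.map (E.cylinder w) x = returnTime E.map (E.cylinder w) y := by
  obtain ⟨hpos, hmem⟩ := hw.returnTime_spec x
  refine (_root_.returnTime_eq hpos ((h.pow_mem_cylinder_iff le_rfl).1 hmem)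
    fun m hm hlt hy => ?_).symm
  exact pow_notMem_of_lt_returnTime hm hlt ((h.pow_mem_cylinder_iff hlt.le).2 hy)

theorem ofFn_word_eq_iff :
    List.ofFn (fun t : Fin m => E.word x t) = List.ofFn (fun t : Fin n => E.word y t) ↔
      m = n ∧ E.Agree m x y := by
  constructor
  · intro h
    obtain rfl : m = n := by simpa only [List.length_ofFn] using congrArg List.length h
    exact ⟨rfl, fun t ht => congrFun (List.ofFn_injective h) ⟨t, ht⟩⟩
  · rintro ⟨rfl, h⟩
    exact congrArg List.ofFn (funext fun t => h t t.2)

-- A return word is always followed by another occurrence of `w`, hence it determines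
-- `w.length` more letters.
theorem returnWord_eq_iff (hw : IsSweepOut E.map (E.cylinder w)) :
    E.returnWord w x = E.returnWord w y ↔
      E.Agree (w.length + returnTime E.map (E.cylinder w) x) x y := by
  rw [returnWord, returnWord, ofFn_word_eq_iff]
  refine ⟨fun ⟨htime, hagree⟩ => agree_add_iff.2 ⟨hagree, ?_⟩, fun h =>
    ⟨h.returnTime_eq hw, h.mono (Nat.le_add_left _ _)⟩⟩
  have hy := (hw.returnTime_spec y).2
  rw [← htime] at hy
  exact (mem_cylinder_iff_agree (hw.returnTime_spec x).2).1 hy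

theorem returnWords_eq_image_orbit (hw : IsSweepOut E.map (E.cylinder w)) (x : X) :
    ReturnWords (E.word x) w =
      E.returnWord w '' (E.cylinder w ∩ range fun n : ℕ => (E.map ^ n) x) := by
  ext r
  constructor
  · rintro ⟨i, j, hi, hj, hij, hfirst, rfl⟩
    have htime : returnTime E.map (E.cylinder w) ((E.map ^ i) x) = j - i := by
      refine _root_.returnTime_eq (Nat.sub_pos_of_lt hij) ?_ fun t ht htj => ?_
      · rwa [pow_mem_cylinder_iff, occursAt_word_pow, Nat.sub_add_cancel hij.le]
      · rw [pow_mem_cylinder_iff, occursAt_word_pow]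
        exact hfirst _ (by omega) (by omega)
    refine ⟨_, ⟨pow_mem_cylinder_iff.2 hi, i, rfl⟩, ?_⟩
    rw [returnWord_eq_ofFn htime]
    simp only [word_pow, add_comm]
  · rintro ⟨_, ⟨hi, i, rfl⟩, rfl⟩
    obtain ⟨hpos, hmem⟩ := hw.returnTime_spec ((E.map ^ i) x)
    set n := returnTime E.map (E.cylinder w) ((E.map ^ i) x) with hn
    rw [pow_mem_cylinder_iff, occursAt_word_pow] at hmem
    refine ⟨i, n + i, pow_mem_cylinder_iff.1 hi, hmem, by omega, fun t hit htn => ?_, ?_⟩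
    · have := pow_notMem_of_lt_returnTime (n := t - i) (by omega) (by omega : t - i < n)
      rwa [pow_mem_cylinder_iff, occursAt_word_pow, Nat.sub_add_cancel hit.le] at this
    · rw [returnWord_eq_ofFn (hn.symm.trans (Nat.add_sub_cancel n i).symm)]
      simp only [word_pow, add_comm]

variable (E) in
/-- The points of the cylinder of `w` that are least among those with the same return word; each
return word has exactly one of them. -/
def returnLeftEnds (w : List A) : Set X :=
  {z ∈ E.cylinder w | E.IsLeftEnd (w.length + returnTime E.map (E.cylinder w) z) z}

theorem injOn_returnWord (hw : IsSweepOut E.map (E.cylinder w)) :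
    InjOn (E.returnWord w) (E.returnLeftEnds w) := by
  intro x hx y hy h
  have hagree := (returnWord_eq_iff hw).1 h
  have hy' := hy.2
  rw [← hagree.returnTime_eq hw] at hy'
  exact hx.2.eq_of_agree hy' hagree

end LinearOrder

section Regular

variable {X A : Type*} [LinearOrder X] [OrderBot X]

/-- A minimal interval exchange with Keane's infinite distinct orbit condition: the left ends of the
intervals, apart from the least point of the space, lie on distinct infinite orbits. Distinctness of
the orbits is the case `l ≠ l'`, where `n = 0` would contradict the injectivity of `left`. -/
structure IsRegular (E : IntervalExchange X A) : Prop where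
  hasDenseOrbits : HasDenseOrbits E.map
  hasDenseOrbits_inv : HasDenseOrbits E.map⁻¹
  eq_zero_of_zpow_left_eq : ∀ (l l' : A) (n : ℤ), E.left l ≠ ⊥ → E.left l' ≠ ⊥ →
    (E.map ^ n) (E.left l) = E.left l' → n = 0

variable {E : IntervalExchange X A} {x z a : X} {i l l' : A} {m n s : ℕ} {w : List A}

theorem left_code_bot : E.left (E.code ⊥) = ⊥ := le_bot_iff.1 (E.left_code_le ⊥)

theorem left_code_symm_bot : E.left (E.code (E.map.symm ⊥)) = E.map.symm ⊥ := by
  rw [Equiv.eq_symm_apply, ← le_bot_iff]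
  have hle := (E.strictMonoOn_map _).monotoneOn (E.code_left _) rfl
    (E.left_code_le (E.map.symm ⊥))
  rwa [Equiv.apply_symm_apply] at hle

theorem exists_le_agree (x : X) (n : ℕ) :
    ∃ y ≤ x, E.Agree n x y ∧ (y = ⊥ ∨ ∃ t < n, ∃ l, (E.map ^ t) y = E.left l) := by
  induction n with
  | zero => exact ⟨⊥, bot_le, fun t ht => absurd ht t.not_lt_zero, .inl rfl⟩
  | succ n ih =>
    obtain ⟨y, hyx, hagree, hy⟩ := ih
    obtain ⟨v, hv⟩ := (E.map ^ n).surjective (E.left (E.word x n))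
    have hvx : (E.map ^ n) v ≤ (E.map ^ n) x := hv.trans_le (E.left_code_le _)
    obtain hle | hle := le_total ((E.map ^ n) v) ((E.map ^ n) y)
    · refine ⟨y, hyx, agree_succ_iff.2 ⟨hagree, ?_⟩,
        hy.imp_right fun ⟨t, ht, h⟩ => ⟨t, ht.trans n.lt_succ_self, h⟩⟩
      have hcode : E.code ((E.map ^ n) v) = E.word x n := by rw [hv, code_left]
      exact ((E.ordConnected_fiber _).out hcode rfl
        ⟨hle, (hagree.symm.pow_le_pow_iff le_rfl).2 hyx⟩).symm
    · have hxv : E.Agree n x v := hagree.trans (hagree.symm.of_pow_mem_Icc ⟨hle, hvx⟩)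
      refine ⟨v, (hxv.symm.pow_le_pow_iff le_rfl).1 hvx, agree_succ_iff.2 ⟨hxv, ?_⟩,
        .inr ⟨n, n.lt_succ_self, _, hv⟩⟩
      rw [word, word, hv, code_left, word]

theorem exists_isLeftEnd_agree (x : X) (n : ℕ) : ∃ y, E.Agree n x y ∧ E.IsLeftEnd n y := by
  obtain ⟨y, -, hagree, rfl | ⟨t, ht, l, hl⟩⟩ := exists_le_agree (E := E) x n
  · exact ⟨⊥, hagree, fun _ _ => bot_le⟩
  · exact ⟨y, hagree, IsLeftEnd.of_pow_eq_left hl ht⟩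

namespace IsRegular

theorem map_bot_ne_bot (hE : E.IsRegular) : E.map ⊥ ≠ ⊥ := by
  intro hfix
  obtain ⟨b, hb, -⟩ := E.exists_gt_code_eq ⊥
  obtain ⟨c, hc, -⟩ := E.exists_gt_code_eq b
  obtain ⟨n, hn⟩ := hE.hasDenseOrbits ⊥ b c hc
  rw [Equiv.Perm.pow_apply_eq_self_of_apply_eq_self hfix] at hn
  exact hb.not_ge hn.1

theorem left_code_symm_bot_ne_bot (hE : E.IsRegular) : E.left (E.code (E.map.symm ⊥)) ≠ ⊥ := by
  rw [left_code_symm_bot, Ne, Equiv.symm_apply_eq]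
  exact hE.map_bot_ne_bot.symm

theorem eq_of_sameCycle_left (hE : E.IsRegular) (hl : E.left l ≠ ⊥) (hl' : E.left l' ≠ ⊥)
    (h : E.map.SameCycle (E.left l) (E.left l')) : l = l' := by
  obtain ⟨n, hn⟩ := h
  obtain rfl := hE.eq_zero_of_zpow_left_eq l l' n hl hl' hn
  exact E.left_injective hn

theorem pow_ne_self_of_sameCycle_left (hE : E.IsRegular) (hl : E.left l ≠ ⊥)
    (h : E.map.SameCycle (E.left l) x) (hn : n ≠ 0) : (E.map ^ n) x ≠ x := by
  obtain ⟨v, rfl⟩ := h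
  intro hfix
  refine hn (Int.natCast_eq_zero.1 (hE.eq_zero_of_zpow_left_eq l l n hl hl ?_))
  apply (E.map ^ v).injective
  rwa [← Equiv.Perm.mul_apply, ← zpow_add, add_comm, zpow_add, Equiv.Perm.mul_apply, zpow_natCast]

theorem eq_bot_or_of_isLeftEnd (hE : E.IsRegular) (hx : E.IsLeftEnd n x) :
    x = ⊥ ∨ ∃ t < n, ∃ l, E.left l ≠ ⊥ ∧ (E.map ^ t) x = E.left l := by
  obtain ⟨y, hyx, hagree, hy⟩ := exists_le_agree (E := E) x n
  obtain rfl : x = y := (hx y hagree).antisymm hyx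
  obtain hbot | ⟨t, ht, l, hl⟩ := hy
  · exact .inl hbot
  obtain hlbot | hlbot := ne_or_eq (E.left l) ⊥
  · exact .inr ⟨t, ht, l, hlbot, hl⟩
  rw [hlbot] at hl
  cases t with
  | zero => exact .inl hl
  | succ t =>
    rw [map_pow_succ, ← Equiv.eq_symm_apply, ← left_code_symm_bot] at hl
    exact .inr ⟨t, by omega, _, hE.left_code_symm_bot_ne_bot, hl⟩

theorem exists_pow_symm_eq_left (hE : E.IsRegular) (hx : E.IsLeftEnd n x) :
    ∃ l, E.left l ≠ ⊥ ∧ ∃ t ≤ n, (E.map ^ t) (E.map.symm x) = E.left l := by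
  obtain rfl | ⟨t, ht, l, hl, htl⟩ := hE.eq_bot_or_of_isLeftEnd hx
  · exact ⟨_, hE.left_code_symm_bot_ne_bot, 0, n.zero_le, left_code_symm_bot.symm⟩
  · refine ⟨l, hl, t + 1, ht, ?_⟩
    rwa [pow_succ, Equiv.Perm.mul_apply, Equiv.apply_symm_apply]

theorem isSweepOut_cylinder (hE : E.IsRegular) (hw : (E.cylinder w).Nonempty) :
    IsSweepOut E.map (E.cylinder w) ∧ IsSweepOut E.map⁻¹ (E.cylinder w) := by
  obtain ⟨x, hx⟩ := hw
  obtain ⟨b, hxb, hagree⟩ := exists_gt_agree (E := E) x w.length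
  have hsub : Ico x b ⊆ E.cylinder w := fun y hy =>
    (mem_cylinder_iff_agree hx).2 (hagree.of_mem_Icc (Ico_subset_Icc_self hy))
  exact ⟨fun y => (hE.hasDenseOrbits y x b hxb).imp fun _ h => hsub h,
    fun y => (hE.hasDenseOrbits_inv y x b hxb).imp fun _ h => hsub h⟩

theorem returnWords_eq_image (hE : E.IsRegular) (hw : IsSweepOut E.map (E.cylinder w))
    (x : X) : ReturnWords (E.word x) w = E.returnWord w '' E.returnLeftEnds w := by
  rw [returnWords_eq_image_orbit hw]
  apply Subset.antisymm <;> rintro _ ⟨y, hy, rfl⟩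
  · obtain ⟨z, hagree, hz⟩ := exists_isLeftEnd_agree (E := E) y
      (w.length + returnTime E.map (E.cylinder w) y)
    have hzw : z ∈ E.cylinder w := (hagree.mono (Nat.le_add_right _ _)).mem_cylinder_iff.1 hy.1
    rw [hagree.returnTime_eq hw] at hz
    exact ⟨z, ⟨hzw, hz⟩, ((returnWord_eq_iff hw).2 hagree).symm⟩
  · obtain ⟨b, hyb, hagree⟩ := exists_gt_agree (E := E) y
      (w.length + returnTime E.map (E.cylinder w) y)
    obtain ⟨n, hn⟩ := hE.hasDenseOrbits x y b hyb
    have hyn := hagree.of_mem_Icc (Ico_subset_Icc_self hn)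
    exact ⟨_, ⟨(hyn.mono (Nat.le_add_right _ _)).mem_cylinder_iff.1 hy.1, n, rfl⟩,
      ((returnWord_eq_iff hw).2 hyn).symm⟩

end IsRegular

/-- `a` is the least point of the cylinder of `w`, and the orbit of its preimage reaches the left
end of the interval `i`, other than `⊥`, by time `w.length`. -/
structure IsBase (E : IntervalExchange X A) (w : List A) (a : X) (i : A) : Prop where
  mem_cylinder : a ∈ E.cylinder w
  isLeftEnd : E.IsLeftEnd w.length a
  left_ne_bot : E.left i ≠ ⊥
  exists_pow_symm_eq : ∃ t ≤ w.length, (E.map ^ t) (E.map.symm a) = E.left i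

theorem IsRegular.exists_isBase (hE : E.IsRegular) (hw : (E.cylinder w).Nonempty) :
    ∃ a i, E.IsBase w a i := by
  obtain ⟨x, hx⟩ := hw
  obtain ⟨a, hagree, ha⟩ := exists_isLeftEnd_agree (E := E) x w.length
  obtain ⟨i, hi, h⟩ := hE.exists_pow_symm_eq_left ha
  exact ⟨a, i, hagree.mem_cylinder_iff.1 hx, ha, hi, h⟩

open scoped Classical in
variable (E) in
/-- The left end of the interval `l`, except that the left ends `⊥` and `left i` are replaced by
`a` and its preimage. When `E.IsBase w a i`, the towers over the cylinder of `w` that contain a mark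
are those over `returnLeftEnds w`, and each of these contains a single mark. -/
noncomputable def mark (a : X) (i l : A) : X :=
  if E.left l = ⊥ then a else if l = i then E.map.symm a else E.left l

theorem mark_of_left_eq_bot (hl : E.left l = ⊥) : E.mark a i l = a := if_pos hl

theorem mark_self (hi : E.left i ≠ ⊥) : E.mark a i i = E.map.symm a := by
  rw [mark, if_neg hi, if_pos rfl]

theorem mark_of_ne (hl : E.left l ≠ ⊥) (hli : l ≠ i) : E.mark a i l = E.left l := by
  rw [mark, if_neg hl, if_neg hli]

namespace IsBase

theorem eq_of_isLeftEnd (h : E.IsBase w a i) (hx : x ∈ E.cylinder w)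
    (hleft : E.IsLeftEnd w.length x) : x = a :=
  hleft.eq_of_agree h.isLeftEnd ((mem_cylinder_iff_agree hx).1 h.mem_cylinder)

theorem sameCycle_left_self (h : E.IsBase w a i) : E.map.SameCycle (E.left i) a := by
  obtain ⟨t, -, ht⟩ := h.exists_pow_symm_eq
  rw [← ht, Equiv.Perm.sameCycle_pow_left, Equiv.Perm.sameCycle_symm_apply_left]

theorem sameCycle_left_mark (h : E.IsBase w a i) (hl : E.left l ≠ ⊥) :
    E.map.SameCycle (E.left l) (E.mark a i l) := by
  obtain rfl | hli := eq_or_ne l i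
  · rw [mark_self hl, Equiv.Perm.sameCycle_symm_apply_right]
    exact h.sameCycle_left_self
  · rw [mark_of_ne hl hli]

theorem mem_returnLeftEnds_of_pow_eq_mark (h : E.IsBase w a i) (hz : z ∈ E.cylinder w)
    (hs : s < returnTime E.map (E.cylinder w) z) (hmark : (E.map ^ s) z = E.mark a i l) :
    z ∈ E.returnLeftEnds w := by
  have of_pow_eq {t : ℕ} (ht : t ≤ returnTime E.map (E.cylinder w) z) (hta : (E.map ^ t) z = a) :
      z ∈ E.returnLeftEnds w :=
    ⟨hz, IsLeftEnd.mono (.of_pow (hta ▸ h.isLeftEnd)) (Nat.add_le_add_left ht _)⟩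
  obtain hl | hl := eq_or_ne (E.left l) ⊥
  · exact of_pow_eq hs.le (hmark.trans (mark_of_left_eq_bot hl))
  obtain rfl | hli := eq_or_ne l i
  · refine of_pow_eq hs ?_
    rw [map_pow_succ, hmark, mark_self hl, Equiv.apply_symm_apply]
  · exact ⟨hz, .of_pow_eq_left (hmark.trans (mark_of_ne hl hli)) (Nat.lt_add_left _ hs)⟩

theorem exists_pow_eq_mark_of_pow_eq (h : E.IsBase w a i) {r : ℕ} (hr : 0 < r) (hnr : n ≤ r)
    (hn : (E.map ^ n) z = a) : ∃ l, ∃ s < r, (E.map ^ s) z = E.mark a i l := by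
  cases n with
  | zero => exact ⟨E.code ⊥, 0, hr, hn.trans (mark_of_left_eq_bot left_code_bot).symm⟩
  | succ n =>
    refine ⟨i, n, hnr, ?_⟩
    rw [mark_self h.left_ne_bot, Equiv.eq_symm_apply, ← map_pow_succ, hn]

theorem exists_pow_eq_mark (h : E.IsBase w a i) (hE : E.IsRegular)
    (hw : IsSweepOut E.map (E.cylinder w)) (hz : z ∈ E.returnLeftEnds w) :
    ∃ l, ∃ s < returnTime E.map (E.cylinder w) z, (E.map ^ s) z = E.mark a i l := by
  obtain ⟨hzw, hleft⟩ := hz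
  obtain ⟨hpos, hmem⟩ := hw.returnTime_spec z
  set r := returnTime E.map (E.cylinder w) z
  have of_isLeftEnd (hz : E.IsLeftEnd w.length z) := h.exists_pow_eq_mark_of_pow_eq hpos hpos.le
    (h.eq_of_isLeftEnd hzw hz : (E.map ^ 0) z = a)
  obtain rfl | ⟨s, hs, l, hl, hsl⟩ := hE.eq_bot_or_of_isLeftEnd hleft
  · exact of_isLeftEnd fun _ _ => bot_le
  obtain hrs | hsr := le_or_gt r s
  · have hleft' : E.IsLeftEnd w.length ((E.map ^ r) z) := by
      refine .of_pow_eq_left (m := s - r) (l := l) ?_ (by omega)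
      rwa [← Equiv.Perm.mul_apply, ← pow_add, Nat.sub_add_cancel hrs]
    exact h.exists_pow_eq_mark_of_pow_eq hpos le_rfl (h.eq_of_isLeftEnd hmem hleft')
  obtain rfl | hli := eq_or_ne l i
  · obtain ⟨t, ht, htl⟩ := h.exists_pow_symm_eq
    obtain hst | hts := lt_or_ge s t
    · exact of_isLeftEnd (.of_pow_eq_left hsl (hst.trans_le ht))
    · refine ⟨l, s - t, by omega, (E.map ^ t).injective ?_⟩
      rw [mark_self hl, htl, ← hsl, ← Equiv.Perm.mul_apply, ← pow_add, Nat.add_sub_cancel' hts]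
  · exact ⟨l, s, hsr, hsl.trans (mark_of_ne hl hli).symm⟩

theorem left_eq_bot_of_pow_eq_mark (h : E.IsBase w a i) (hE : E.IsRegular)
    (hm : m < returnTime E.map (E.cylinder w) z) (hl : E.left l = ⊥)
    (hml : (E.map ^ m) z = E.mark a i l) (hnl : (E.map ^ n) z = E.mark a i l') : E.left l' = ⊥ := by
  rw [mark_of_left_eq_bot hl] at hml
  obtain rfl | hm0 := Nat.eq_zero_or_pos m
  · obtain rfl : z = a := hml
    by_contra hl'
    have hcycle := h.sameCycle_left_mark hl'
    rw [← hnl, Equiv.Perm.sameCycle_pow_right] at hcycle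
    obtain rfl := hE.eq_of_sameCycle_left hl' h.left_ne_bot
      (hcycle.trans h.sameCycle_left_self.symm)
    rw [mark_self hl', Equiv.eq_symm_apply, ← map_pow_succ] at hnl
    exact hE.pow_ne_self_of_sameCycle_left hl' hcycle n.succ_ne_zero hnl
  · exact absurd (hml ▸ h.mem_cylinder) (pow_notMem_of_lt_returnTime hm0 hm)

theorem eq_of_pow_eq_mark (h : E.IsBase w a i) (hE : E.IsRegular)
    (hm : m < returnTime E.map (E.cylinder w) z) (hn : n < returnTime E.map (E.cylinder w) z)
    (hml : (E.map ^ m) z = E.mark a i l) (hnl : (E.map ^ n) z = E.mark a i l') : l = l' := by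
  obtain hl | hl := eq_or_ne (E.left l) ⊥
  · exact E.left_injective (hl.trans (h.left_eq_bot_of_pow_eq_mark hE hm hl hml hnl).symm)
  have hl' : E.left l' ≠ ⊥ := mt (h.left_eq_bot_of_pow_eq_mark hE hn · hnl hml) hl
  have hcycle := h.sameCycle_left_mark hl
  have hcycle' := h.sameCycle_left_mark hl'
  rw [← hml, Equiv.Perm.sameCycle_pow_right] at hcycle
  rw [← hnl, Equiv.Perm.sameCycle_pow_right] at hcycle'
  exact hE.eq_of_sameCycle_left hl hl' (hcycle.trans hcycle'.symm)

end IsBase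

namespace IsRegular

theorem exists_injective_range_eq_returnLeftEnds (hE : E.IsRegular)
    (hw : (E.cylinder w).Nonempty) :
    ∃ g : A → X, Function.Injective g ∧ range g = E.returnLeftEnds w := by
  obtain ⟨a, i, h⟩ := hE.exists_isBase hw
  obtain ⟨hsweep, hsweep'⟩ := hE.isSweepOut_cylinder hw
  choose g hgw n hn hg using fun l => exists_lt_returnTime_pow_eq hsweep hsweep' (E.mark a i l)
  refine ⟨g, fun l l' hll' => ?_, Subset.antisymm ?_ fun z hz => ?_⟩
  · exact h.eq_of_pow_eq_mark hE (hn l) (hll' ▸ hn l') (hg l) (hll' ▸ hg l')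
  · exact range_subset_iff.2 fun l => h.mem_returnLeftEnds_of_pow_eq_mark (hgw l) (hn l) (hg l)
  · obtain ⟨l, s, hs, hsl⟩ := h.exists_pow_eq_mark hE hsweep hz
    exact ⟨l, eq_of_pow_eq_pow_of_lt_returnTime (hgw l) hz.1 (hn l) hs ((hg l).trans hsl.symm)⟩

theorem finite_returnWords_and_ncard_eq [Finite A] (hE : E.IsRegular) (x : X)
    (hw : IsFactor (E.word x) w) :
    (ReturnWords (E.word x) w).Finite ∧ (ReturnWords (E.word x) w).ncard = Nat.card A := by
  obtain ⟨j, hj⟩ := hw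
  have hne : (E.cylinder w).Nonempty := ⟨_, pow_mem_cylinder_iff.2 hj⟩
  have hsweep := (hE.isSweepOut_cylinder hne).1
  obtain ⟨g, hg, hrange⟩ := hE.exists_injective_range_eq_returnLeftEnds hne
  rw [hE.returnWords_eq_image hsweep, (injOn_returnWord hsweep).ncard_image, ← hrange]
  exact ⟨(finite_range g).image _, ncard_range_of_injective hg⟩

end IsRegular

end Regular

/-- The interval exchange of `[0, 1)` that translates each of the intervals `[left l, right l)`,
coding the points by the interval that they belong to. -/
def ofTranslations {A : Type*} (T : Equiv.Perm (Ico (0 : ℝ) 1)) (code : Ico (0 : ℝ) 1 → A)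
    (left : A → Ico (0 : ℝ) 1) (right : A → ℝ) (left_lt_right : ∀ l, (left l : ℝ) < right l)
    (code_eq_iff : ∀ y l, code y = l ↔ (y : ℝ) ∈ Ico (left l : ℝ) (right l))
    (sub_eq : ∀ y z, code y = code z → (T z - T y : ℝ) = z - y) :
    IntervalExchange (Ico (0 : ℝ) 1) A where
  map := T
  code := code
  left := left
  isLeast_left l := ⟨(code_eq_iff _ _).2 ⟨le_rfl, left_lt_right l⟩,
    fun y hy => ((code_eq_iff y l).1 hy).1⟩
  ordConnected_fiber l := ⟨fun x hx z hz y hy => (code_eq_iff y l).2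
    ⟨((code_eq_iff x l).1 hx).1.trans hy.1, lt_of_le_of_lt hy.2 ((code_eq_iff z l).1 hz).2⟩⟩
  exists_gt_code_eq x := by
    obtain ⟨hleft, hright⟩ := (code_eq_iff x _).1 rfl
    obtain ⟨y, hxy, hy⟩ := exists_between (lt_min hright x.2.2)
    rw [lt_min_iff] at hy
    exact ⟨⟨y, x.2.1.trans hxy.le, hy.2⟩, hxy,
      ((code_eq_iff _ _).2 ⟨hleft.trans hxy.le, hy.1⟩).symm⟩
  strictMonoOn_map l y hy z hz hyz := by
    have hsub := sub_eq y z (Eq.trans hy (Eq.symm hz))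
    have hyz' : (y : ℝ) < z := hyz
    exact Subtype.coe_lt_coe.1 (by linarith)
  ordConnected_image l := by
    refine ⟨?_⟩
    rintro _ ⟨x, hx, rfl⟩ _ ⟨z, hz, rfl⟩ y ⟨hxy, hyz⟩
    have hxy' : (T x : ℝ) ≤ y := hxy
    have hyz' : (y : ℝ) ≤ T z := hyz
    have hsub := sub_eq x z (Eq.trans hx (Eq.symm hz))
    have hxl := ((code_eq_iff x l).1 hx).1
    have hzr := ((code_eq_iff z l).1 hz).2
    obtain ⟨v, hv⟩ : ∃ v : Ico (0 : ℝ) 1, (v : ℝ) = x + (y - T x) :=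
      ⟨⟨x + (y - T x), by linarith [x.2.1], by linarith [z.2.2]⟩, rfl⟩
    have hvl : code v = l := (code_eq_iff v l).2 ⟨by linarith, by linarith⟩
    refine ⟨v, hvl, Subtype.ext ?_⟩
    linarith [sub_eq x v (Eq.trans hx hvl.symm)]

end IntervalExchange

section Rotation

variable {α : ℝ} {y z : Ico (0 : ℝ) 1}

/-- The rotation `y ↦ {y + α}` of the circle, represented by `[0, 1)`. -/
noncomputable def circleRotation (α : ℝ) : Equiv.Perm (Ico (0 : ℝ) 1) where
  toFun y := ⟨Int.fract (y + α), Int.fract_nonneg _, Int.fract_lt_one _⟩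
  invFun y := ⟨Int.fract (y - α), Int.fract_nonneg _, Int.fract_lt_one _⟩
  left_inv y := Subtype.ext <| Int.fract_eq_iff.2 ⟨y.2.1, y.2.2, -⌊(y + α : ℝ)⌋, by
    simp only [Int.fract]; push_cast; ring⟩
  right_inv y := Subtype.ext <| Int.fract_eq_iff.2 ⟨y.2.1, y.2.2, -⌊(y - α : ℝ)⌋, by
    simp only [Int.fract]; push_cast; ring⟩

theorem coe_circleRotation (α : ℝ) (y : Ico (0 : ℝ) 1) :
    (circleRotation α y : ℝ) = Int.fract (y + α) := rfl

theorem circleRotation_eq_iff : circleRotation α y = z ↔ ∃ m : ℤ, (y + α - z : ℝ) = m := by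
  rw [← Subtype.coe_inj, coe_circleRotation, Int.fract_eq_iff]
  exact ⟨fun h => h.2.2, fun h => ⟨z.2.1, z.2.2, h⟩⟩

theorem circleRotation_circleRotation (α α' : ℝ) (y : Ico (0 : ℝ) 1) :
    circleRotation α (circleRotation α' y) = circleRotation (α + α') y := by
  refine circleRotation_eq_iff.2 ⟨⌊(y + (α + α') : ℝ)⌋ - ⌊(y + α' : ℝ)⌋, ?_⟩
  rw [coe_circleRotation, coe_circleRotation, Int.fract, Int.fract]
  push_cast
  ring

theorem circleRotation_zero : circleRotation 0 = 1 :=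
  Equiv.ext fun y => circleRotation_eq_iff.2 ⟨0, by simp⟩

theorem circleRotation_inv (α : ℝ) : (circleRotation α)⁻¹ = circleRotation (-α) := by
  rw [inv_eq_iff_mul_eq_one]
  ext1 y
  rw [Equiv.Perm.mul_apply, circleRotation_circleRotation, add_neg_cancel, circleRotation_zero]

theorem circleRotation_neg_circleRotation (α : ℝ) (y : Ico (0 : ℝ) 1) :
    circleRotation (-α) (circleRotation α y) = y := by
  rw [circleRotation_circleRotation, neg_add_cancel, circleRotation_zero, Equiv.Perm.one_apply]

theorem circleRotation_pow (α : ℝ) (n : ℕ) : circleRotation α ^ n = circleRotation (n * α) := by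
  induction n with
  | zero => rw [pow_zero, Nat.cast_zero, zero_mul, circleRotation_zero]
  | succ n ih =>
    ext1 y
    rw [pow_succ', Equiv.Perm.mul_apply, ih, circleRotation_circleRotation]
    push_cast
    ring_nf

theorem circleRotation_zpow (α : ℝ) (n : ℤ) : circleRotation α ^ n = circleRotation (n * α) := by
  obtain ⟨n, rfl | rfl⟩ := n.eq_nat_or_neg
  · rw [zpow_natCast, circleRotation_pow, Int.cast_natCast]
  · rw [zpow_neg, zpow_natCast, circleRotation_pow, circleRotation_inv, Int.cast_neg,
      Int.cast_natCast, neg_mul]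

theorem hasDenseOrbits_circleRotation (hα : Irrational α) : HasDenseOrbits (circleRotation α) := by
  intro x a b hab
  have hdense : DenseRange fun n : ℕ => n • (α : AddCircle (1 : ℝ)) :=
    denseRange_zsmul_iff_nsmul.1 (AddCircle.denseRange_zsmul_coe_iff.2 (by rwa [div_one]))
  obtain ⟨_, ⟨r, ⟨har, hrb⟩, hr⟩, n, rfl⟩ := hdense.inter_open_nonempty _
    (QuotientAddGroup.isOpenMap_coe (N := AddSubgroup.zmultiples (1 : ℝ)) _
      (isOpen_Ioo (a := (a - x : ℝ)) (b := b - x)))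
    ((nonempty_Ioo.2 (sub_lt_sub_right (Subtype.coe_lt_coe.2 hab) _)).image _)
  obtain ⟨m, hm⟩ : ∃ m : ℤ, (m • 1 : ℝ) = n * α - r := by
    rw [← AddCircle.coe_eq_zero_iff, AddCircle.coe_sub, ← nsmul_eq_mul, AddCircle.coe_nsmul]
    exact sub_eq_zero.2 hr.symm
  rw [sub_lt_iff_lt_add'] at har
  rw [lt_sub_iff_add_lt'] at hrb
  have hmem : x + r ∈ Ico (0 : ℝ) 1 := ⟨a.2.1.trans har.le, hrb.trans b.2.2⟩
  refine ⟨n, ?_⟩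
  rw [circleRotation_pow, circleRotation_eq_iff (z := ⟨_, hmem⟩) |>.2 ⟨m, ?_⟩]
  · exact ⟨har.le, hrb⟩
  · rw [zsmul_one] at hm
    rw [hm]
    ring

end Rotation

/-- A partition of the circle, represented by `[0, 1)`, into the `k` intervals
`[endpoint l.castSucc, endpoint l.succ)`. -/
structure CirclePartition (k : ℕ) where
  endpoint : Fin (k + 1) → ℝ
  strictMono_endpoint : StrictMono endpoint
  endpoint_zero : endpoint 0 = 0
  endpoint_last : endpoint (Fin.last k) = 1

namespace CirclePartition

variable {k : ℕ} (P : CirclePartition k) {v : Ico (0 : ℝ) 1} {i l l' : Fin k}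

theorem endpoint_nonneg (j : Fin (k + 1)) : 0 ≤ P.endpoint j :=
  P.endpoint_zero ▸ P.strictMono_endpoint.monotone j.zero_le

theorem endpoint_le_one (j : Fin (k + 1)) : P.endpoint j ≤ 1 :=
  P.endpoint_last ▸ P.strictMono_endpoint.monotone j.le_last

theorem endpoint_castSucc_lt_succ (l : Fin k) : P.endpoint l.castSucc < P.endpoint l.succ :=
  P.strictMono_endpoint l.castSucc_lt_succ

theorem exists_mem_Ico_endpoint (v : Ico (0 : ℝ) 1) :
    ∃ l : Fin k, (v : ℝ) ∈ Ico (P.endpoint l.castSucc) (P.endpoint l.succ) := by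
  have exists_of_lt (j : Fin (k + 1)) : v < P.endpoint j →
      ∃ l : Fin k, (v : ℝ) ∈ Ico (P.endpoint l.castSucc) (P.endpoint l.succ) := by
    induction j using Fin.induction with
    | zero => exact fun h => absurd v.2.1 (h.trans_eq P.endpoint_zero).not_ge
    | succ l ih => exact fun h => (lt_or_ge _ _).elim ih fun hl => ⟨l, hl, h⟩
  exact exists_of_lt (Fin.last k) (v.2.2.trans_eq P.endpoint_last.symm)

/-- The index of the interval containing `v`. -/
noncomputable def index (v : Ico (0 : ℝ) 1) : Fin k := (P.exists_mem_Ico_endpoint v).choose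

theorem mem_Ico_index (v : Ico (0 : ℝ) 1) :
    (v : ℝ) ∈ Ico (P.endpoint (P.index v).castSucc) (P.endpoint (P.index v).succ) :=
  (P.exists_mem_Ico_endpoint v).choose_spec

theorem index_eq_iff :
    P.index v = l ↔ (v : ℝ) ∈ Ico (P.endpoint l.castSucc) (P.endpoint l.succ) := by
  refine ⟨fun h => h ▸ P.mem_Ico_index v, fun h => ?_⟩
  have hv := P.mem_Ico_index v
  exact le_antisymm
    (Fin.castSucc_lt_succ_iff.1 (P.strictMono_endpoint.lt_iff_lt.1 (hv.1.trans_lt h.2)))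
    (Fin.castSucc_lt_succ_iff.1 (P.strictMono_endpoint.lt_iff_lt.1 (h.1.trans_lt hv.2)))

/-- The left end of the interval `l`, as a point of the circle. -/
def leftEnd (l : Fin k) : Ico (0 : ℝ) 1 :=
  ⟨P.endpoint l.castSucc, P.endpoint_nonneg _,
    (P.endpoint_castSucc_lt_succ l).trans_le (P.endpoint_le_one _)⟩

/-- The length of the interval `l`. -/
def length (l : Fin k) : ℝ := P.endpoint l.succ - P.endpoint l.castSucc

theorem length_pos (l : Fin k) : 0 < P.length l := sub_pos.2 (P.endpoint_castSucc_lt_succ l)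

theorem index_leftEnd (l : Fin k) : P.index (P.leftEnd l) = l :=
  P.index_eq_iff.2 ⟨le_rfl, P.endpoint_castSucc_lt_succ l⟩

-- No interval contains an endpoint in its interior, so that rotating an endpoint to `0` does not
-- cut the intervals.
theorem coe_circleRotation_neg_endpoint (j : Fin (k + 1)) (v : Ico (0 : ℝ) 1) :
    (circleRotation (-P.endpoint j) v : ℝ) =
      v - P.endpoint j + if (P.index v).castSucc < j then 1 else 0 := by
  obtain ⟨hleft, hright⟩ := P.mem_Ico_index v
  rw [coe_circleRotation, Int.fract_eq_iff]
  split_ifs with hj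
  · have hvj := hright.trans_le (P.strictMono_endpoint.monotone (Fin.castSucc_lt_iff_succ_le.1 hj))
    exact ⟨by linarith [v.2.1, P.endpoint_le_one j], by linarith, -1, by push_cast; ring⟩
  · have hjv := (P.strictMono_endpoint.monotone (not_lt.1 hj)).trans hleft
    exact ⟨by linarith, by linarith [v.2.2, P.endpoint_nonneg j], 0, by push_cast; ring⟩

variable {P} in
theorem circleRotation_neg_endpoint_sub_eq {v v' : Ico (0 : ℝ) 1} (h : P.index v = P.index v')
    (j : Fin (k + 1)) :
    (circleRotation (-P.endpoint j) v' - circleRotation (-P.endpoint j) v : ℝ) = v' - v := by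
  rw [coe_circleRotation_neg_endpoint, coe_circleRotation_neg_endpoint, h]
  ring

theorem endpoint_eq_sum (j : Fin (k + 1)) :
    P.endpoint j = ∑ l, if l.castSucc < j then P.length l else 0 := by
  induction j using Fin.induction with
  | zero => simp [P.endpoint_zero]
  | succ r ih =>
    have hsplit (l : Fin k) : (if l.castSucc < r.succ then P.length l else 0) =
        (if l.castSucc < r.castSucc then P.length l else 0) + if l = r then P.length l else 0 := by
      have hlr : l.castSucc < r.succ ↔ l.castSucc < r.castSucc ∨ l = r := by
        rw [Fin.castSucc_lt_succ_iff, Fin.castSucc_lt_castSucc_iff, le_iff_lt_or_eq]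
      grind
    simp only [hsplit, Finset.sum_add_distrib, ← ih, Finset.sum_ite_eq', Finset.mem_univ, if_true]
    rw [length]
    ring

theorem circleRotation_length (i : Fin k) (y : Ico (0 : ℝ) 1) : circleRotation (P.length i) y =
    circleRotation (-P.endpoint i.castSucc) (circleRotation (P.endpoint i.succ) y) := by
  rw [circleRotation_circleRotation, neg_add_eq_sub, length]

theorem index_eq_iff_circleRotation_neg_endpoint (j : Fin (k + 1)) :
    P.index v = l ↔ (circleRotation (-P.endpoint j) v : ℝ) ∈
      Ico (circleRotation (-P.endpoint j) (P.leftEnd l) : ℝ)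
        (circleRotation (-P.endpoint j) (P.leftEnd l) + P.length l) := by
  have sub_eq {v : Ico (0 : ℝ) 1} (h : P.index v = l) :=
    circleRotation_neg_endpoint_sub_eq ((P.index_leftEnd l).trans h.symm) j
  have coe_leftEnd : (P.leftEnd l : ℝ) = P.endpoint l.castSucc := rfl
  have hlength : P.length l = P.endpoint l.succ - P.endpoint l.castSucc := rfl
  constructor
  · intro h
    obtain ⟨hleft, hright⟩ := P.index_eq_iff.1 h
    have hsub := sub_eq h
    exact ⟨by linarith, by linarith⟩
  · rintro ⟨hleft, hright⟩
    obtain ⟨s, hs⟩ : ∃ s : ℝ, (circleRotation (-P.endpoint j) v : ℝ) =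
      circleRotation (-P.endpoint j) (P.leftEnd l) + s := ⟨_, (add_sub_cancel _ _).symm⟩
    obtain ⟨v', hv'⟩ : ∃ v' : Ico (0 : ℝ) 1, (v' : ℝ) = P.leftEnd l + s :=
      ⟨⟨P.leftEnd l + s, by linarith [(P.leftEnd l).2.1], by
        linarith [P.endpoint_le_one l.succ]⟩, rfl⟩
    have hindex : P.index v' = l := P.index_eq_iff.2 ⟨by linarith, by linarith⟩
    have hsub := sub_eq hindex
    rwa [(circleRotation (-P.endpoint j)).injective (a₁ := v) (a₂ := v')
      (Subtype.ext (by linarith))]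

variable {P} in
theorem circleRotation_length_sub_eq {y z : Ico (0 : ℝ) 1}
    (h : P.index (circleRotation (P.endpoint i.succ) y) =
      P.index (circleRotation (P.endpoint i.succ) z)) :
    (circleRotation (P.length i) z - circleRotation (P.length i) y : ℝ) = z - y := by
  rw [circleRotation_length, circleRotation_length, circleRotation_neg_endpoint_sub_eq h,
    ← circleRotation_neg_endpoint_sub_eq h i.succ, circleRotation_neg_circleRotation,
    circleRotation_neg_circleRotation]

/-- The rotation by the length of the interval `i`, as an interval exchange: the intervals are those
of the partition, rotated so that the one following `i` starts at `0`. -/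
noncomputable def exchange (i : Fin k) : IntervalExchange (Ico (0 : ℝ) 1) (Fin k) :=
  .ofTranslations (circleRotation (P.length i))
    (fun y => P.index (circleRotation (P.endpoint i.succ) y))
    (fun l => circleRotation (-P.endpoint i.succ) (P.leftEnd l))
    (fun l => circleRotation (-P.endpoint i.succ) (P.leftEnd l) + P.length l)
    (fun l => lt_add_of_pos_right _ (P.length_pos l))
    (fun y l => by
      rw [P.index_eq_iff_circleRotation_neg_endpoint i.succ, circleRotation_neg_circleRotation])
    (fun _ _ h => circleRotation_length_sub_eq h)

theorem exchange_word_circleRotation (i : Fin k) (v : Ico (0 : ℝ) 1) (n : ℕ) :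
    (P.exchange i).word (circleRotation (-P.endpoint i.succ) v) n =
      P.index (circleRotation (n * P.length i) v) := by
  change P.index (circleRotation _ ((circleRotation _ ^ n) _)) = _
  rw [circleRotation_pow, circleRotation_circleRotation, circleRotation_circleRotation]
  congr 3
  ring

variable {P}

theorem exists_add_mul_length_sub_eq_of_exchange_zpow_left_eq {n : ℤ}
    (h : ((P.exchange i).map ^ n) ((P.exchange i).left l) = (P.exchange i).left l') :
    ∃ m : ℤ, P.endpoint l.castSucc + n * P.length i - P.endpoint l'.castSucc = m := by
  change (circleRotation _ ^ n) (circleRotation _ _) = circleRotation _ _ at h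
  rw [circleRotation_zpow, circleRotation_circleRotation, add_comm,
    ← circleRotation_circleRotation, EmbeddingLike.apply_eq_iff_eq] at h
  exact circleRotation_eq_iff.1 h

theorem coeff_eq_zero_of_add_mul_length_sub_eq (hind : LinearIndependent ℚ P.length) {n m : ℤ}
    (h : P.endpoint l.castSucc + n * P.length i - P.endpoint l'.castSucc = m) (r : Fin k) :
    (if r < l then 1 else 0) - (if r < l' then 1 else 0) + (if r = i then n else 0) - m = 0 := by
  have htotal : ∑ r, P.length r = 1 := by
    simpa only [P.endpoint_last, Fin.castSucc_lt_last, if_true] using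
      (P.endpoint_eq_sum (Fin.last k)).symm
  have hsum : ∑ r, (((if r < l then 1 else 0) - (if r < l' then 1 else 0) +
      (if r = i then n else 0) - m : ℤ) : ℚ) • P.length r = 0 := by
    rw [P.endpoint_eq_sum l.castSucc, P.endpoint_eq_sum l'.castSucc] at h
    simp only [Rat.smul_def, Rat.cast_intCast, Fin.castSucc_lt_castSucc_iff] at h ⊢
    push_cast
    simp only [sub_mul, add_mul, ite_mul, one_mul, zero_mul, Finset.sum_sub_distrib,
      Finset.sum_add_distrib, Finset.sum_ite_eq', Finset.mem_univ, if_true, ← Finset.mul_sum,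
      htotal]
    linarith
  exact_mod_cast Fintype.linearIndependent_iff.1 hind _ hsum r

local instance : Fact ((0 : ℝ) < 1) := ⟨one_pos⟩

theorem exchange_left_eq_bot {f : Fin k} {m : ℤ}
    (h : P.endpoint f.castSucc - P.endpoint i.succ = m) : (P.exchange i).left f = ⊥ := by
  change circleRotation _ _ = _
  refine circleRotation_eq_iff.2 ⟨m, ?_⟩
  rw [← h]
  exact sub_zero _

theorem exists_exchange_left_eq_bot (i : Fin k) :
    ∃ f : Fin k, ((f : ℕ) = i + 1 ∨ (f : ℕ) = 0 ∧ (i : ℕ) + 1 = k) ∧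
      (P.exchange i).left f = ⊥ := by
  obtain hik | hik := (Nat.succ_le_of_lt i.2).lt_or_eq
  · exact ⟨⟨i + 1, hik⟩, .inl rfl, exchange_left_eq_bot (m := 0) (by
      rw [Int.cast_zero, sub_eq_zero]; rfl)⟩
  · refine ⟨⟨0, i.pos⟩, .inr ⟨rfl, hik⟩, exchange_left_eq_bot (m := -1) ?_⟩
    have hlast : i.succ = Fin.last k := Fin.ext hik
    have hzero : (⟨0, i.pos⟩ : Fin k).castSucc = 0 := rfl
    rw [hlast, hzero, P.endpoint_last, P.endpoint_zero]
    norm_num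

theorem isRegular_exchange (hind : LinearIndependent ℚ P.length) (hi : Irrational (P.length i)) :
    (P.exchange i).IsRegular where
  hasDenseOrbits := hasDenseOrbits_circleRotation hi
  hasDenseOrbits_inv := by
    change HasDenseOrbits (circleRotation _)⁻¹
    rw [circleRotation_inv]
    exact hasDenseOrbits_circleRotation hi.neg
  eq_zero_of_zpow_left_eq l l' n hl hl' h := by
    obtain ⟨m, hm⟩ := exists_add_mul_length_sub_eq_of_exchange_zpow_left_eq h
    obtain ⟨f, hf, hfbot⟩ := exists_exchange_left_eq_bot (P := P) i
    have hlf : (l : ℕ) ≠ f := fun h => hl (Fin.ext h ▸ hfbot)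
    have hlf' : (l' : ℕ) ≠ f := fun h => hl' (Fin.ext h ▸ hfbot)
    have coeff_i := coeff_eq_zero_of_add_mul_length_sub_eq hind hm i
    have coeff_f := coeff_eq_zero_of_add_mul_length_sub_eq hind hm f
    simp only [Fin.ext_iff, Fin.lt_def] at coeff_i coeff_f
    -- On the circle the intervals `i` and `f` are adjacent, and their common end is neither the
    -- left end of `l` nor that of `l'`; so the coefficients of their lengths differ by `n`.
    grind

end CirclePartition

/-- the coding of a rotation by irrational `α` with respect to a
partition of the circle into `k` intervals with rationally independent lengths,
one of which has length `α`, has property `R_k`: every factor has exactly `k`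
return words. -/
theorem coding_of_rotation_has_property_R_k
    (k : ℕ) (α : ℝ) (hα : Irrational α) (hα01 : α ∈ Set.Ioo (0:ℝ) 1)
    (β : Fin (k + 1) → ℝ) (hβ : StrictMono β)
    (hβ0 : β 0 = 0) (hβk : β (Fin.last k) = 1)
    (hind : LinearIndependent ℚ (fun i : Fin k => β i.succ - β i.castSucc))
    (hlen : ∃ i : Fin k, β i.succ - β i.castSucc = α)
    (x : ℝ) (hx : x ∈ Set.Ico (0:ℝ) 1)
    (u : ℕ → Fin k)
    (hu : ∀ n : ℕ,
      Int.fract (x + (n : ℝ) * α) ∈ Set.Ico (β (u n).castSucc) (β (u n).succ)) :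
    ∀ w : List (Fin k), IsFactor u w →
      (ReturnWords u w).Finite ∧ (ReturnWords u w).ncard = k := by
  intro w hw
  obtain ⟨i, rfl⟩ := hlen
  let P : CirclePartition k := ⟨β, hβ, hβ0, hβk⟩
  have hcoding : u = (P.exchange i).word (circleRotation (-P.endpoint i.succ) ⟨x, hx⟩) := by
    funext n
    rw [P.exchange_word_circleRotation]
    exact (P.index_eq_iff.2 (hu n)).symm
  have hregular : (P.exchange i).IsRegular := CirclePartition.isRegular_exchange hind hα
  rw [hcoding] at hw ⊢
  simpa only [Nat.card_fin] using hregular.finite_returnWords_and_ncard_eq _ hw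
end
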